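/- Let g be a continuous complex-valued function on the closed unit disk, and let f ∈ C²(𝔻)∩C(𝕋) satisfy Δf = g on 𝔻, f(0) = 0, J_f(0) = 1, sup_{z∈𝔻}|g(z)| ≤ M₁ and sup_{z∈𝔻}|f(z)| ≤ M₂, where M₁ ≥ 0 and M₂ > 0 are constants. Let r₀ ∈ (0,1) be the solution of 1/((4/π)M₂ + (2/3)M₁) − (4M₂/π)·r₀(2−r₀)/(1−r₀)² − 2M₁·[log(4(1+r₀)) − log r₀]·(2+r₀)r₀ = 0. Then f is bi-Lipschitz on 𝔻_{r₀}: there is a constant L₁ > 0 such that for all z₁, z₂ ∈ 𝔻_{r₀}, L₁|z₁ − z₂| ≤ |f(z₁) − f(z₂)| ≤ ((4M₂/π)·1/(1−r₀²) + (2/3)M₁)·|z₁ − z₂|. -/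

import Mathlib

open Metric MeasureTheory Set Filter

noncomputable section

/-- The Wirtinger derivative `∂f/∂z = (f_x - i f_y)/2`. -/
def wdz (f : ℂ → ℂ) (z : ℂ) : ℂ :=
  (fderiv ℝ f z 1 - Complex.I * fderiv ℝ f z Complex.I) / 2

/-- The Wirtinger derivative `∂f/∂z̄ = (f_x + i f_y)/2`. -/
def wdzbar (f : ℂ → ℂ) (z : ℂ) : ℂ :=
  (fderiv ℝ f z 1 + Complex.I * fderiv ℝ f z Complex.I) / 2

/-- The Laplacian `Δf = f_xx + f_yy` (equivalently `4 f_{z z̄}`). -/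
def lap (f : ℂ → ℂ) (z : ℂ) : ℂ :=
  fderiv ℝ (fun w => fderiv ℝ f w 1) z 1 +
    fderiv ℝ (fun w => fderiv ℝ f w Complex.I) z Complex.I

/-- The Poisson integral `P_ψ(z) = (1/2π) ∫₀^{2π} ((1-|z|²)/|1-z e^{-it}|²) ψ(e^{it}) dt`. -/
def poissonIntegral (ψ : ℂ → ℂ) (z : ℂ) : ℂ :=
  (1 / (2 * Real.pi) : ℝ) • ∫ t in (0:ℝ)..(2 * Real.pi),
    (((1 - ‖z‖ ^ 2) / ‖1 - z * Complex.exp (-(Complex.I * (t : ℂ)))‖ ^ 2 : ℝ) : ℂ) *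
      ψ (Complex.exp (Complex.I * (t : ℂ)))

/-- The Green potential `G_g(z) = (1/2π) ∫_𝔻 log|(1 - z w̄)/(z - w)| g(w) dA(w)`. -/
def greenPotential (g : ℂ → ℂ) (z : ℂ) : ℂ :=
  (1 / (2 * Real.pi) : ℝ) • ∫ w in ball (0:ℂ) 1,
    ((Real.log ‖(1 - z * (starRingEnd ℂ) w) / (z - w)‖ : ℝ) : ℂ) * g w

/-- `sup_{z ∈ 𝔻} |g(z)|`. -/
def supD (g : ℂ → ℂ) : ℝ := sSup ((fun z => ‖g z‖) '' ball (0:ℂ) 1)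

/-- The function `μ(r)` with constant `c` in place of `‖g‖_∞`. -/
def mu (c r : ℝ) : ℝ :=
  c * (1 - r ^ 2) / (8 * r ^ 2) *
    ((1 + r ^ 2) / (1 - r ^ 2) - (1 - r ^ 2) / (2 * r) * Real.log ((1 + r) / (1 - r)))

/-!
Approximate `f` on the unit circle by a harmonic polynomial `h = A + conj B`, so that `f = h + u`
with `Δ u = Δ f` and `u` arbitrarily small on the circle. The derivative of `h` is controlled by the
sharp bound `4 N / π` on cosine coefficients of functions bounded by `N`, combined with disk
automorphisms for its size and with the power series for its variation. For `u`, the derivative at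
the centre of a disk is read off from the first cosine coefficient on the boundary circle, whose
radial dependence is an ODE driven by `Δ u`; comparing concentric circles yields the logarithmic
term. At the origin the gradient bound is strict, and with `J_f(0) = 1` this makes the least
stretching of `Df(0)` exceed the variation of `Df` on `𝔻_{r₀}`.
-/

section CosineIntegrals

open Real

variable {E : Type*} [NormedAddCommGroup E] [NormedSpace ℝ E]

lemma integral_abs_cos_half_period : ∫ t in (-(π / 2))..(π / 2), |cos t| = 2 := by
  have habs : EqOn (fun t => |cos t|) cos (uIcc (-(π / 2)) (π / 2)) := fun t ht => by
    rw [uIcc_of_le (by linarith [pi_pos])] at ht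
    exact abs_of_nonneg (cos_nonneg_of_mem_Icc ht)
  rw [intervalIntegral.integral_congr habs, integral_cos, sin_neg, sin_pi_div_two]
  norm_num

lemma integral_affine_trig_mul_abs_cos (C x y : ℝ) :
    ∫ t in (-π)..π, (C + x * cos t + y * sin t) * |cos t| = 4 * C := by
  set g : ℝ → ℝ := fun t => (C + x * cos t + y * sin t) * |cos t| with hg
  have hgi : ∀ a b : ℝ, IntervalIntegrable g volume a b := fun a b =>
    Continuous.intervalIntegrable (by fun_prop) a b
  have hper : Function.Periodic g (2 * π) := fun t => by
    simp only [hg, cos_add_two_pi, sin_add_two_pi]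
  have hsum : ∀ t, g t + g (t + π) = 2 * C * |cos t| := fun t => by
    simp only [hg, cos_add_pi, sin_add_pi, abs_neg]; ring
  calc ∫ t in (-π)..π, g t = ∫ t in (-(π / 2))..(π / 2 + π), g t := by
        have h := hper.intervalIntegral_add_eq (-π) (-(π / 2))
        rwa [show -π + 2 * π = π by ring, show -(π / 2) + 2 * π = π / 2 + π by ring] at h
    _ = (∫ t in (-(π / 2))..(π / 2), g t) + ∫ t in (-(π / 2))..(π / 2), g (t + π) := by
        rw [intervalIntegral.integral_comp_add_right, show -(π / 2) + π = π / 2 by ring,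
          intervalIntegral.integral_add_adjacent_intervals (hgi _ _) (hgi _ _)]
    _ = ∫ t in (-(π / 2))..(π / 2), 2 * C * |cos t| := by
        rw [← intervalIntegral.integral_add (hgi _ _)
          (Continuous.intervalIntegrable (by fun_prop) _ _)]
        simp only [hsum]
    _ = 4 * C := by
        rw [intervalIntegral.integral_const_mul, integral_abs_cos_half_period]; ring

lemma integral_abs_cos : ∫ t in (-π)..π, |cos t| = 4 := by
  simpa using integral_affine_trig_mul_abs_cos 1 0 0

lemma integral_abs_cos_nat_mul {n : ℕ} (hn : n ≠ 0) : ∫ t in (-π)..π, |cos (n * t)| = 4 := by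
  have hn' : (n : ℝ) ≠ 0 := Nat.cast_ne_zero.2 hn
  have hper : Function.Periodic (fun t => |cos t|) (2 * π) := fun t => by
    simp only [cos_add_two_pi]
  have h := hper.intervalIntegral_add_zsmul_eq n (-(n * π)) (fun a b =>
    Continuous.intervalIntegrable (by fun_prop) a b)
  have hone := hper.intervalIntegral_add_eq (-(n * π)) (-π)
  rw [show -π + 2 * π = π by ring, integral_abs_cos] at hone
  rw [hone, show -(n * π) + (n : ℤ) • (2 * π) = n * π by simp; ring] at h
  rw [intervalIntegral.integral_comp_mul_left (fun t => |cos t|) hn', mul_neg, h]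
  simp [hn]

lemma norm_integral_smul_le_of_norm_le {w b : ℝ → ℝ} {F : ℝ → E} (hw : Continuous w)
    (hb : Continuous b) {s t : ℝ} (hst : s ≤ t) (hF : ∀ x ∈ Icc s t, ‖F x‖ ≤ b x) :
    ‖∫ x in s..t, w x • F x‖ ≤ ∫ x in s..t, b x * |w x| := by
  refine intervalIntegral.norm_integral_le_of_norm_le hst (ae_of_all _ fun x hx => ?_)
    (Continuous.intervalIntegrable (by fun_prop) _ _)
  rw [norm_smul, norm_eq_abs, mul_comm]
  gcongr
  exact hF x (Ioc_subset_Icc_self hx)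

lemma norm_integral_cos_smul_le_of_affine_trig {F : ℝ → E} {C x y : ℝ}
    (hF : ∀ t, ‖F t‖ ≤ C + x * cos t + y * sin t) :
    ‖∫ t in (-π)..π, cos t • F t‖ ≤ 4 * C := by
  rw [← integral_affine_trig_mul_abs_cos C x y]
  exact norm_integral_smul_le_of_norm_le continuous_cos (by fun_prop) (by linarith [pi_pos])
    fun t _ => hF t

lemma norm_integral_cos_nat_mul_smul_le {F : ℝ → E} {M : ℝ} (hF : ∀ t, ‖F t‖ ≤ M) {n : ℕ}
    (hn : n ≠ 0) : ‖∫ t in (-π)..π, cos (n * t) • F t‖ ≤ 4 * M := by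
  have h := norm_integral_smul_le_of_norm_le (w := fun t => cos (n * t)) (b := fun _ => M)
    (by fun_prop) continuous_const (by linarith [pi_pos] : -π ≤ π) fun t _ => hF t
  rwa [intervalIntegral.integral_const_mul, integral_abs_cos_nat_mul hn, mul_comm] at h

lemma norm_integral_cos_smul_le {F : ℝ → E} {M : ℝ} (hF : ∀ t, ‖F t‖ ≤ M) :
    ‖∫ t in (-π)..π, cos t • F t‖ ≤ 4 * M := by
  simpa using norm_integral_cos_nat_mul_smul_le hF one_ne_zero

variable [CompleteSpace E]

lemma integral_cos_smul_sub_const {F : ℝ → E} (hF : Continuous F) (d : ℝ) (a : E) :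
    ∫ t in (π / 2 - d)..(π / 2 + d), cos t • (F t - a) =
      ∫ t in (π / 2 - d)..(π / 2 + d), cos t • F t := by
  have hcos : ∫ t in (π / 2 - d)..(π / 2 + d), cos t = 0 := by
    rw [integral_cos, sin_add, sin_sub]; simp
  simp only [smul_sub]
  rw [intervalIntegral.integral_sub (Continuous.intervalIntegrable (by fun_prop) _ _)
    (Continuous.intervalIntegrable (by fun_prop) _ _), intervalIntegral.integral_smul_const, hcos,
    zero_smul, sub_zero]

lemma exists_norm_integral_cos_smul_le_near_pi_div_two {F : ℝ → E} (hF : Continuous F) {ε : ℝ}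
    (hε : 0 < ε) : ∃ d ∈ Ioc 0 (π / 2),
      ‖∫ t in (π / 2 - d)..(π / 2 + d), cos t • F t‖ ≤
        ε * ∫ t in (π / 2 - d)..(π / 2 + d), |cos t| := by
  obtain ⟨δ, hδ, hclose⟩ := Metric.continuous_iff.1 hF (π / 2) ε hε
  have hd : 0 < min (δ / 2) (π / 2) := lt_min (by positivity) (by positivity)
  have hdδ : min (δ / 2) (π / 2) < δ := (min_le_left _ _).trans_lt (by linarith)
  refine ⟨_, ⟨hd, min_le_right _ _⟩, ?_⟩
  rw [← integral_cos_smul_sub_const hF _ (F (π / 2)), ← intervalIntegral.integral_const_mul]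
  refine norm_integral_smul_le_of_norm_le continuous_cos continuous_const (by linarith)
    fun t ht => ?_
  rw [← dist_eq_norm]
  refine (hclose t ?_).le
  rw [Real.dist_eq, abs_lt]
  constructor <;> linarith [ht.1, ht.2]

-- Equality would force `‖F‖ = M` with `F` changing sign at the zero `π / 2` of `cos`; the gain
-- comes from subtracting the constant `F (π / 2)` near that zero.
lemma norm_integral_cos_smul_lt {F : ℝ → E} {M : ℝ} (hM : 0 < M) (hc : Continuous F)
    (hF : ∀ t, ‖F t‖ ≤ M) : ‖∫ t in (-π)..π, cos t • F t‖ < 4 * M := by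
  obtain ⟨d, ⟨hd, hdπ⟩, hmid⟩ :=
    exists_norm_integral_cos_smul_le_near_pi_div_two hc (half_pos hM)
  have := pi_pos
  set a := π / 2 - d with ha
  set b := π / 2 + d
  have hi : ∀ s t : ℝ, IntervalIntegrable (fun t => cos t • F t) volume s t := fun s t =>
    Continuous.intervalIntegrable (by fun_prop) s t
  have hi' : ∀ s t : ℝ, IntervalIntegrable (fun t => |cos t|) volume s t := fun s t =>
    Continuous.intervalIntegrable (by fun_prop) s t
  have hfar : ∀ s t : ℝ, s ≤ t → ‖∫ x in s..t, cos x • F x‖ ≤ M * ∫ x in s..t, |cos x| :=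
    fun s t hst => (norm_integral_smul_le_of_norm_le continuous_cos continuous_const hst
      fun x _ => hF x).trans_eq (intervalIntegral.integral_const_mul _ _)
  have hgain : 0 < ∫ t in a..b, |cos t| := by
    refine intervalIntegral.integral_pos (by linarith) (by fun_prop) (fun t _ => abs_nonneg _)
      ⟨a, ⟨le_rfl, by linarith⟩, abs_pos.2 (cos_pos_of_mem_Ioo ⟨?_, ?_⟩).ne'⟩ <;> linarith
  have htotal := integral_abs_cos
  rw [← intervalIntegral.integral_add_adjacent_intervals (hi' (-π) a) (hi' a π),
    ← intervalIntegral.integral_add_adjacent_intervals (hi' a b) (hi' b π)] at htotal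
  rw [← intervalIntegral.integral_add_adjacent_intervals (hi (-π) a) (hi a π),
    ← intervalIntegral.integral_add_adjacent_intervals (hi a b) (hi b π)]
  calc _ ≤ M * (∫ t in (-π)..a, |cos t|) + (M / 2 * (∫ t in a..b, |cos t|) +
        M * ∫ t in b..π, |cos t|) := norm_add_le_of_le (hfar _ _ (by linarith))
          (norm_add_le_of_le hmid (hfar _ _ (by linarith)))
    _ < 4 * M := by linear_combination M * htotal + M / 2 * hgain

end CosineIntegrals

section CosineCoefficient

open Real InnerProductSpace Laplacian

variable {E : Type*} [NormedAddCommGroup E] [NormedSpace ℝ E]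

/-- The point of the circle `|z| = |e|` at angle `t` from `e`. -/
def rot (e : ℂ) (t : ℝ) : ℂ := e * Complex.exp (t * Complex.I)

@[fun_prop]
lemma continuous_rot (e : ℂ) : Continuous (rot e) := by unfold rot; fun_prop

lemma norm_rot {e : ℂ} (he : ‖e‖ = 1) (t : ℝ) : ‖rot e t‖ = 1 := by
  simp [rot, he, Complex.norm_exp_ofReal_mul_I]

lemma norm_smul_rot {e : ℂ} (he : ‖e‖ = 1) (ρ t : ℝ) : ‖ρ • rot e t‖ = |ρ| := by
  rw [norm_smul, norm_rot he, mul_one, norm_eq_abs]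

lemma rot_eq_cos_add_sin (e : ℂ) (t : ℝ) : rot e t = cos t • e + sin t • (Complex.I * e) := by
  simp only [rot, Complex.exp_mul_I, Complex.real_smul, Complex.ofReal_cos, Complex.ofReal_sin]
  ring

lemma rot_neg_pi (e : ℂ) : rot e (-π) = rot e π := by simp [rot_eq_cos_add_sin]

lemma hasDerivAt_rot (e : ℂ) (t : ℝ) : HasDerivAt (rot e) (Complex.I * rot e t) t := by
  have h : HasDerivAt (fun t : ℝ => (t : ℂ) * Complex.I) (1 * Complex.I) t :=
    (Complex.ofRealCLM.hasDerivAt (x := t)).mul_const _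
  refine (h.cexp.const_mul e).congr_deriv ?_
  simp only [rot]; ring

lemma integral_cos_smul_rot (e : ℂ) : ∫ t in (-π)..π, cos t • rot e t = π • e := by
  have hcos : ∫ t in (-π)..π, cos t * cos t = π := by
    simpa [pow_two] using integral_cos_sq (a := -π) (b := π)
  have hsin : ∫ t in (-π)..π, cos t * sin t = 0 := by
    simpa [mul_comm] using integral_sin_mul_cos₁ (a := -π) (b := π)
  simp only [rot_eq_cos_add_sin, smul_add, smul_smul]
  rw [intervalIntegral.integral_add (Continuous.intervalIntegrable (by fun_prop) _ _)
    (Continuous.intervalIntegrable (by fun_prop) _ _), intervalIntegral.integral_smul_const,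
    intervalIntegral.integral_smul_const, hcos, hsin, zero_smul, add_zero]

lemma hasDerivAt_intervalIntegral_of_continuous {F F' : ℝ → ℝ → E} {a b : ℝ}
    (hF : ∀ x, Continuous (F x)) (hF' : Continuous (Function.uncurry F'))
    (hd : ∀ x t, HasDerivAt (F · t) (F' x t) x) (x₀ : ℝ) :
    HasDerivAt (fun x => ∫ t in a..b, F x t) (∫ t in a..b, F' x₀ t) x₀ := by
  obtain ⟨C, hC⟩ := ((isCompact_closedBall x₀ 1).prod (isCompact_uIcc (a := a) (b := b)))
    |>.exists_bound_of_continuousOn hF'.continuousOn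
  refine (intervalIntegral.hasDerivAt_integral_of_dominated_loc_of_deriv_le (s := ball x₀ 1)
    (bound := fun _ => C) (ball_mem_nhds x₀ one_pos)
    (Eventually.of_forall fun x => (hF x).aestronglyMeasurable)
    ((hF x₀).intervalIntegrable _ _) ?_ ?_ (by simp) (ae_of_all _ fun t _ x _ => hd x t)).2
  · exact (hF'.comp (by fun_prop : Continuous fun t : ℝ => (x₀, t))).aestronglyMeasurable
  · exact ae_of_all _ fun t ht x hx => hC (x, t) ⟨ball_subset_closedBall hx, uIoc_subset_uIcc ht⟩

lemma laplacian_eq_fderiv_fderiv (v : ℂ → E) (z : ℂ) {e : ℂ} (he : ‖e‖ = 1) :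
    Δ v z = fderiv ℝ (fderiv ℝ v) z e e +
      fderiv ℝ (fderiv ℝ v) z (Complex.I * e) (Complex.I * e) := by
  let b := Complex.orthonormalBasisOneI.map (rotation ⟨e, mem_sphere_zero_iff_norm.2 he⟩)
  have hrot : ∀ w, rotation (⟨e, mem_sphere_zero_iff_norm.2 he⟩ : Circle) w = e * w :=
    rotation_apply _
  have h0 : b 0 = e := by simp [b, hrot]
  have h1 : b 1 = Complex.I * e := by simp [b, hrot, mul_comm]
  rw [laplacian_eq_iteratedFDeriv_orthonormalBasis v b]
  simp [Fin.sum_univ_two, iteratedFDeriv_two_apply, h0, h1]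

lemma contDiff_one_fderiv {v : ℂ → E} (hv : ContDiff ℝ 2 v) : ContDiff ℝ 1 (fderiv ℝ v) :=
  hv.fderiv_right (by norm_num)

lemma continuous_fderiv_fderiv {v : ℂ → E} (hv : ContDiff ℝ 2 v) :
    Continuous (fderiv ℝ (fderiv ℝ v)) :=
  (contDiff_one_fderiv hv).continuous_fderiv (by norm_num)

lemma continuous_laplacian {v : ℂ → E} (hv : ContDiff ℝ 2 v) : Continuous (Δ v) := by
  have := continuous_fderiv_fderiv hv
  rw [funext fun z => laplacian_eq_fderiv_fderiv v z norm_one]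
  fun_prop

/-- The first cosine coefficient `∫ v(c + ρ e e^{it}) cos t dt` of `v` on the circle of centre `c`
and radius `ρ`, relative to the direction `e`. -/
def cosCoeff (v : ℂ → E) (c e : ℂ) (ρ : ℝ) : E :=
  ∫ t in (-π)..π, cos t • v (c + ρ • rot e t)

/-- The derivative of `cosCoeff v c e` in the radius. -/
def cosCoeffDeriv (v : ℂ → E) (c e : ℂ) (ρ : ℝ) : E :=
  ∫ t in (-π)..π, cos t • fderiv ℝ v (c + ρ • rot e t) (rot e t)

/-- The quantity `ρ³ (φ(ρ)/ρ)'` for `φ = cosCoeff v c e`, whose own derivative only involves the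
Laplacian of `v`. -/
def cosFlux (v : ℂ → E) (c e : ℂ) (ρ : ℝ) : E :=
  ρ ^ 2 • cosCoeffDeriv v c e ρ - ρ • cosCoeff v c e ρ

lemma hasDerivAt_add_smul_rot_radius (c e : ℂ) (t ρ : ℝ) :
    HasDerivAt (fun ρ : ℝ => c + ρ • rot e t) (rot e t) ρ := by
  simpa using ((hasDerivAt_id ρ).smul_const (rot e t)).const_add c

lemma hasDerivAt_add_smul_rot_angle (c e : ℂ) (ρ t : ℝ) :
    HasDerivAt (fun t : ℝ => c + ρ • rot e t) (ρ • (Complex.I * rot e t)) t :=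
  ((hasDerivAt_rot e t).const_smul ρ).const_add c

lemma hasDerivAt_cosCoeff {v : ℂ → E} (hv : ContDiff ℝ 1 v) (c e : ℂ) (ρ : ℝ) :
    HasDerivAt (cosCoeff v c e) (cosCoeffDeriv v c e ρ) ρ := by
  have hv0 := hv.continuous
  have := hv.continuous_fderiv (by norm_num)
  refine hasDerivAt_intervalIntegral_of_continuous
    (F' := fun ρ t => cos t • fderiv ℝ v (c + ρ • rot e t) (rot e t))
    (fun ρ => by fun_prop) (by unfold Function.uncurry; fun_prop) (fun ρ t => ?_) ρ
  exact ((hv.differentiable (by norm_num) _).hasFDerivAt.comp_hasDerivAt ρ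
    (hasDerivAt_add_smul_rot_radius c e t ρ)).const_smul (cos t)

lemma hasDerivAt_cosCoeffDeriv {v : ℂ → E} (hv : ContDiff ℝ 2 v) (c e : ℂ) (ρ : ℝ) :
    HasDerivAt (cosCoeffDeriv v c e) (∫ t in (-π)..π,
      cos t • fderiv ℝ (fderiv ℝ v) (c + ρ • rot e t) (rot e t) (rot e t)) ρ := by
  have hv1 := contDiff_one_fderiv hv
  have hv1c := hv1.continuous
  have := continuous_fderiv_fderiv hv
  refine hasDerivAt_intervalIntegral_of_continuous
    (F' := fun ρ t => cos t • fderiv ℝ (fderiv ℝ v) (c + ρ • rot e t) (rot e t) (rot e t))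
    (fun ρ => by fun_prop) (by unfold Function.uncurry; fun_prop) (fun ρ t => ?_) ρ
  have h := (hv1.differentiable (by norm_num) (c + ρ • rot e t)).hasFDerivAt.comp_hasDerivAt ρ
    (hasDerivAt_add_smul_rot_radius c e t ρ)
  refine ((h.clm_apply (hasDerivAt_const ρ (rot e t))).const_smul (cos t)).congr_deriv ?_
  simp only [map_zero, add_zero]

lemma hasDerivAt_inv_smul_cosCoeff {v : ℂ → E} (hv : ContDiff ℝ 1 v) (c e : ℂ) {ρ : ℝ}
    (hρ : ρ ≠ 0) :
    HasDerivAt (fun ρ => ρ⁻¹ • cosCoeff v c e ρ) ((ρ ^ 3)⁻¹ • cosFlux v c e ρ) ρ := by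
  refine ((hasDerivAt_inv hρ).smul (hasDerivAt_cosCoeff hv c e ρ)).congr_deriv ?_
  rw [cosFlux, smul_sub, smul_smul, smul_smul]
  match_scalars <;> field_simp

variable [CompleteSpace E]

-- Integration by parts in the angle: the integrand is the derivative of
-- `ρ cos t · Dv(iE) + sin t · v`, where `E = rot e t`.
lemma integral_cos_smul_angular {v : ℂ → E} (hv : ContDiff ℝ 2 v) (c e : ℂ) (ρ : ℝ) :
    ∫ t in (-π)..π, cos t • (ρ ^ 2 • fderiv ℝ (fderiv ℝ v) (c + ρ • rot e t)
      (Complex.I * rot e t) (Complex.I * rot e t) - ρ • fderiv ℝ v (c + ρ • rot e t) (rot e t) +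
      v (c + ρ • rot e t)) = 0 := by
  have hv0 := hv.continuous
  have hv1 := contDiff_one_fderiv hv
  have hv1c := hv1.continuous
  have := continuous_fderiv_fderiv hv
  have hderiv : ∀ t : ℝ, HasDerivAt (fun t : ℝ =>
      (ρ * cos t) • fderiv ℝ v (c + ρ • rot e t) (Complex.I * rot e t) +
        sin t • v (c + ρ • rot e t))
      (cos t • (ρ ^ 2 • fderiv ℝ (fderiv ℝ v) (c + ρ • rot e t)
        (Complex.I * rot e t) (Complex.I * rot e t) -
        ρ • fderiv ℝ v (c + ρ • rot e t) (rot e t) + v (c + ρ • rot e t))) t := by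
    intro t
    have hpt := hasDerivAt_add_smul_rot_angle c e ρ t
    have hDv := (((hv1.differentiable (by norm_num) _).hasFDerivAt.comp_hasDerivAt t
      hpt).clm_apply ((hasDerivAt_rot e t).const_mul Complex.I))
    have hv' := (hv.differentiable (by norm_num) _).hasFDerivAt.comp_hasDerivAt t hpt
    have hI : Complex.I * (Complex.I * rot e t) = -rot e t := by
      rw [← mul_assoc, Complex.I_mul_I, neg_one_mul]
    refine ((((hasDerivAt_cos t).const_mul ρ).smul hDv).add
      ((hasDerivAt_sin t).smul hv')).congr_deriv ?_
    simp only [Function.comp_apply, hI, map_neg, map_smul, _root_.smul_apply]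
    module
  rw [intervalIntegral.integral_eq_sub_of_hasDerivAt (fun t _ => hderiv t)
    (Continuous.intervalIntegrable (by fun_prop) _ _)]
  simp [rot_neg_pi]

lemma sq_smul_integral_cos_smul_angular {v : ℂ → E} (hv : ContDiff ℝ 2 v) (c e : ℂ) (ρ : ℝ) :
    ρ ^ 2 • ∫ t in (-π)..π, cos t • fderiv ℝ (fderiv ℝ v) (c + ρ • rot e t)
      (Complex.I * rot e t) (Complex.I * rot e t) =
      ρ • cosCoeffDeriv v c e ρ - cosCoeff v c e ρ := by
  have hv0 := hv.continuous
  have hv1 := (contDiff_one_fderiv hv).continuous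
  have := continuous_fderiv_fderiv hv
  have hparts := integral_cos_smul_angular hv c e ρ
  simp only [smul_add, smul_sub, smul_comm (cos _)] at hparts
  rw [intervalIntegral.integral_add (Continuous.intervalIntegrable (by fun_prop) _ _)
    (Continuous.intervalIntegrable (by fun_prop) _ _), intervalIntegral.integral_sub
    (Continuous.intervalIntegrable (by fun_prop) _ _)
    (Continuous.intervalIntegrable (by fun_prop) _ _), intervalIntegral.integral_smul,
    intervalIntegral.integral_smul] at hparts
  rw [eq_sub_iff_add_eq, ← sub_eq_zero, ← hparts, cosCoeff, cosCoeffDeriv]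
  abel

lemma hasDerivAt_cosFlux {v : ℂ → E} (hv : ContDiff ℝ 2 v) (c : ℂ) {e : ℂ} (he : ‖e‖ = 1)
    (ρ : ℝ) : HasDerivAt (cosFlux v c e)
      (ρ ^ 2 • ∫ t in (-π)..π, cos t • Δ v (c + ρ • rot e t)) ρ := by
  have := continuous_fderiv_fderiv hv
  refine (((hasDerivAt_pow 2 ρ).smul (hasDerivAt_cosCoeffDeriv hv c e ρ)).sub
    ((hasDerivAt_id ρ).smul (hasDerivAt_cosCoeff (hv.of_le (by norm_num)) c e ρ))).congr_deriv ?_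
  have hlap := fun t => laplacian_eq_fderiv_fderiv v (c + ρ • rot e t) (norm_rot he t)
  simp only [hlap, smul_add]
  rw [intervalIntegral.integral_add (Continuous.intervalIntegrable (by fun_prop) _ _)
    (Continuous.intervalIntegrable (by fun_prop) _ _), smul_add,
    sq_smul_integral_cos_smul_angular hv]
  simp only [id]
  module

lemma norm_cosFlux_le {v : ℂ → E} (hv : ContDiff ℝ 2 v) {c e : ℂ} (he : ‖e‖ = 1) {R M : ℝ}
    (hM : ∀ w ∈ ball c R, ‖Δ v w‖ ≤ M) {ρ : ℝ} (hρ : ρ ∈ Icc 0 R) :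
    ‖cosFlux v c e ρ‖ ≤ 4 * M / 3 * ρ ^ 3 := by
  refine image_norm_le_of_norm_deriv_right_le_deriv_boundary (a := 0) (b := R)
    (f' := fun ρ => ρ ^ 2 • ∫ t in (-π)..π, cos t • Δ v (c + ρ • rot e t))
    (B' := fun ρ => 4 * M * ρ ^ 2)
    (fun ρ _ => (hasDerivAt_cosFlux hv c he ρ).continuousAt.continuousWithinAt)
    (fun ρ _ => (hasDerivAt_cosFlux hv c he ρ).hasDerivWithinAt) (by simp [cosFlux])
    (fun ρ => ((hasDerivAt_pow 3 ρ).const_mul (4 * M / 3)).congr_deriv (by norm_num; ring))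
    (fun ρ hρ => ?_) hρ
  have hcos := norm_integral_cos_smul_le (F := fun t => Δ v (c + ρ • rot e t)) fun t => hM _ <| by
    simpa [norm_rot he, abs_of_nonneg hρ.1] using hρ.2
  rw [norm_smul, norm_pow, norm_eq_abs, sq_abs, mul_comm]
  gcongr

lemma tendsto_inv_smul_cosCoeff {v : ℂ → E} (hv : ContDiff ℝ 1 v) (c e : ℂ) :
    Tendsto (fun ρ => ρ⁻¹ • cosCoeff v c e ρ) (nhdsWithin 0 (Ioi 0))
      (nhds (π • fderiv ℝ v c e)) := by
  have hzero : cosCoeff v c e 0 = 0 := by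
    simp [cosCoeff]
  have hderiv : cosCoeffDeriv v c e 0 = π • fderiv ℝ v c e := by
    simp only [cosCoeffDeriv, zero_smul, add_zero, ← map_smul]
    rw [ContinuousLinearMap.intervalIntegral_comp_comm _
      (Continuous.intervalIntegrable (by fun_prop) _ _), integral_cos_smul_rot]
  have h := hasDerivAt_iff_tendsto_slope.1 (hasDerivAt_cosCoeff hv c e 0)
  rw [hderiv] at h
  refine (h.mono_left (nhdsWithin_mono _ fun ρ hρ => ne_of_gt hρ)).congr fun ρ => ?_
  rw [slope_def_module, hzero, sub_zero, sub_zero]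

end CosineCoefficient

section CentreEstimates

open Real InnerProductSpace Laplacian

variable {E : Type*} [NormedAddCommGroup E] [NormedSpace ℝ E]

lemma setIntegral_ball_eq_integral_polar {F : ℂ → E} (hF : Continuous F) {R : ℝ} (hR : 0 ≤ R) :
    ∫ w in ball 0 R, F w = ∫ ρ in (0)..R, ∫ t in (-π)..π, ρ • F (ρ • rot 1 t) := by
  have hpolar : ∀ p, Complex.polarCoord.symm p = p.1 • rot 1 p.2 := fun p => by
    rw [Complex.polarCoord_symm_apply, rot_eq_cos_add_sin]
    simp [mul_add]
  have htarget : polarCoord.target ∩ Iio R ×ˢ univ = Ioo 0 R ×ˢ Ioo (-π) π := by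
    rw [polarCoord_target, prod_inter_prod, Ioi_inter_Iio, inter_univ]
  calc ∫ w in ball 0 R, F w
      = ∫ p in polarCoord.target, (Iio R ×ˢ univ).indicator
          (fun p : ℝ × ℝ => p.1 • F (p.1 • rot 1 p.2)) p := by
        rw [← integral_indicator measurableSet_ball, ← Complex.integral_comp_polarCoord_symm]
        refine setIntegral_congr_fun polarCoord.open_target.measurableSet fun p hp => ?_
        have hmem : p.1 • rot 1 p.2 ∈ ball 0 R ↔ p ∈ Iio R ×ˢ univ := by
          simp [norm_rot, abs_of_pos (show 0 < p.1 from hp.1)]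
        simp only [hpolar, indicator, hmem, smul_ite, smul_zero]
    _ = ∫ p in Ioo 0 R ×ˢ Ioo (-π) π, p.1 • F (p.1 • rot 1 p.2) := by
        rw [setIntegral_indicator (measurableSet_Iio.prod .univ), htarget]
    _ = ∫ ρ in (0)..R, ∫ t in (-π)..π, ρ • F (ρ • rot 1 t) := by
        rw [Measure.volume_eq_prod, setIntegral_prod]
        · simp only [intervalIntegral.integral_of_le hR,
            intervalIntegral.integral_of_le (neg_le_self pi_pos.le), integral_Ioc_eq_integral_Ioo]
        · exact (Continuous.continuousOn (by unfold rot; fun_prop)).integrableOn_compact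
            (isCompact_Icc.prod isCompact_Icc) |>.mono_set
            (prod_mono Ioo_subset_Icc_self Ioo_subset_Icc_self)

lemma volume_real_ball (a : ℂ) {r : ℝ} (hr : 0 ≤ r) : volume.real (ball a r) = π * r ^ 2 := by
  rw [Measure.real, Complex.volume_ball]
  simp [ENNReal.toReal_ofReal hr, mul_comm]

lemma volume_real_ball_sdiff_ball_le {a b : ℂ} {R r : ℝ} (hab : dist a b ≤ r) (hr : r ≤ 2 * R) :
    volume.real (ball a R \ ball b R) ≤ π * (R * r) := by
  have hr0 : 0 ≤ r := dist_nonneg.trans hab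
  have hsub_a : ball (midpoint ℝ a b) (R - r / 2) ⊆ ball a R := ball_subset_ball' <| by
    rw [dist_midpoint_left (𝕜 := ℝ)]
    norm_num
    linarith
  have hsub_b : ball (midpoint ℝ a b) (R - r / 2) ⊆ ball b R := ball_subset_ball' <| by
    rw [dist_midpoint_right (𝕜 := ℝ)]
    norm_num
    linarith
  calc volume.real (ball a R \ ball b R)
      ≤ volume.real (ball a R \ ball (midpoint ℝ a b) (R - r / 2)) :=
        measureReal_mono (sdiff_subset_sdiff_right hsub_b)
          ((measure_mono sdiff_subset).trans_lt measure_ball_lt_top).ne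
    _ = π * R ^ 2 - π * (R - r / 2) ^ 2 := by
        rw [measureReal_sdiff hsub_a measurableSet_ball, volume_real_ball _ (by linarith),
          volume_real_ball _ (by linarith)]
    _ ≤ π * (R * r) := by
        rw [← mul_sub]
        gcongr
        nlinarith [sq_nonneg r]

lemma norm_setIntegral_sub_setIntegral_le {α : Type*} [MeasurableSpace α] {μ : Measure α}
    {s t : Set α} {p q : α → E} {A B C : ℝ} (hs : MeasurableSet s) (ht : MeasurableSet t)
    (hμs : μ s < ⊤) (hμt : μ t < ⊤) (hp : IntegrableOn p s μ) (hq : IntegrableOn q t μ)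
    (hA : ∀ x ∈ s ∩ t, ‖p x - q x‖ ≤ A) (hB : ∀ x ∈ s \ t, ‖p x‖ ≤ B)
    (hC : ∀ x ∈ t \ s, ‖q x‖ ≤ C) :
    ‖∫ x in s, p x ∂μ - ∫ x in t, q x ∂μ‖ ≤
      A * μ.real (s ∩ t) + B * μ.real (s \ t) + C * μ.real (t \ s) := by
  rw [← integral_inter_add_sdiff ht hp, ← integral_inter_add_sdiff hs hq, inter_comm t s,
    add_sub_add_comm, ← integral_sub (hp.mono_set inter_subset_left)
      (hq.mono_set inter_subset_right), add_assoc]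
  refine (norm_add_le _ _).trans (add_le_add ?_ ((norm_sub_le _ _).trans (add_le_add ?_ ?_)))
  · exact norm_setIntegral_le_of_norm_le_const ((measure_mono inter_subset_left).trans_lt hμs) hA
  · exact norm_setIntegral_le_of_norm_le_const ((measure_mono sdiff_subset).trans_lt hμs) hB
  · exact norm_setIntegral_le_of_norm_le_const ((measure_mono sdiff_subset).trans_lt hμt) hC

-- On the common part of the two discs only the weight `Re (w - c)` changes; each of the two lunes
-- has area at most `π R r`.
lemma norm_setIntegral_ball_re_smul_sub_le {F : ℂ → E} (hF : Continuous F) {a b : ℂ} {R r M : ℝ}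
    (hab : dist a b ≤ r) (hR : 0 < R) (hr : r ≤ 2 * R) (hM : ∀ w ∈ ball a R ∪ ball b R, ‖F w‖ ≤ M) :
    ‖(∫ w in ball a R, (w - a).re • F w) - ∫ w in ball b R, (w - b).re • F w‖ ≤
      3 * π * r * M * R ^ 2 := by
  have hr0 : 0 ≤ r := dist_nonneg.trans hab
  have hM0 : 0 ≤ M := (norm_nonneg _).trans (hM a (.inl (mem_ball_self hR)))
  have hweight : ∀ c, ∀ w ∈ ball c R, ‖F w‖ ≤ M → ‖(w - c).re • F w‖ ≤ R * M :=
    fun c w hw hFw => by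
      rw [norm_smul]
      exact mul_le_mul ((Complex.abs_re_le_norm _).trans (mem_ball_iff_norm.1 hw).le) hFw
        (norm_nonneg _) hR.le
  have hint : ∀ c, IntegrableOn (fun w => (w - c).re • F w) (ball c R) := fun c =>
    (Continuous.continuousOn (by fun_prop)).integrableOn_compact (isCompact_closedBall c R)
      |>.mono_set ball_subset_closedBall
  refine (norm_setIntegral_sub_setIntegral_le (A := r * M) measurableSet_ball measurableSet_ball
    measure_ball_lt_top measure_ball_lt_top (hint a) (hint b) (fun w hw => ?_)
    (fun w hw => hweight a w hw.1 (hM w (.inl hw.1)))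
    (fun w hw => hweight b w hw.1 (hM w (.inr hw.1)))).trans ?_
  · rw [← sub_smul, ← Complex.sub_re, sub_sub_sub_cancel_left, norm_smul]
    refine mul_le_mul ((Complex.abs_re_le_norm _).trans ?_) (hM w (.inl hw.1)) (norm_nonneg _) hr0
    rwa [← dist_eq_norm, dist_comm]
  · calc r * M * volume.real (ball a R ∩ ball b R) + R * M * volume.real (ball a R \ ball b R) +
          R * M * volume.real (ball b R \ ball a R)
        ≤ r * M * (π * R ^ 2) + R * M * (π * (R * r)) + R * M * (π * (R * r)) := by
          gcongr
          · rw [← volume_real_ball a hR.le]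
            exact measureReal_mono inter_subset_left measure_ball_lt_top.ne
          · exact volume_real_ball_sdiff_ball_le hab hr
          · exact volume_real_ball_sdiff_ball_le (dist_comm a b ▸ hab) hr
      _ = 3 * π * r * M * R ^ 2 := by ring

variable [CompleteSpace E]

lemma cosFlux_eq_setIntegral {v : ℂ → E} (hv : ContDiff ℝ 2 v) {e : ℂ} (he : ‖e‖ = 1) (c : ℂ)
    {R : ℝ} (hR : 0 ≤ R) :
    cosFlux v (e * c) e R = ∫ w in ball c R, (w - c).re • Δ v (e * w) := by
  have hΔ := continuous_laplacian hv
  have hpolar : ∀ ρ t : ℝ, ρ • (ρ • rot 1 t).re • Δ v (e * (c + ρ • rot 1 t)) =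
      ρ ^ 2 • (cos t • Δ v (e * c + ρ • rot e t)) := fun ρ t => by
    have hre : (ρ • rot 1 t).re = ρ * cos t := by
      rw [Complex.smul_re, rot, one_mul, Complex.exp_ofReal_mul_I_re, smul_eq_mul]
    rw [hre, smul_smul, smul_smul, mul_add, mul_smul_comm, rot, rot, one_mul, pow_two, mul_assoc]
  have htranslate : ∫ w in ball c R, (w - c).re • Δ v (e * w) =
      ∫ w in ball 0 R, w.re • Δ v (e * (c + w)) := by
    rw [← (measurePreserving_add_left volume c).setIntegral_preimage_emb
      (measurableEmbedding_addLeft c)]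
    simp [preimage_add_ball]
  have : Continuous fun ρ : ℝ => ∫ t in (-π)..π, cos t • Δ v (e * c + ρ • rot e t) :=
    intervalIntegral.continuous_parametric_intervalIntegral_of_continuous'
      (by unfold rot; fun_prop) _ _
  rw [htranslate, setIntegral_ball_eq_integral_polar (by fun_prop) hR]
  simp only [hpolar, intervalIntegral.integral_smul]
  rw [intervalIntegral.integral_eq_sub_of_hasDerivAt (fun ρ _ => hasDerivAt_cosFlux hv _ he ρ)
    (Continuous.intervalIntegrable (by fun_prop) _ _)]
  simp [cosFlux]

lemma norm_cosFlux_sub_cosFlux_le {v : ℂ → E} (hv : ContDiff ℝ 2 v) {a b e : ℂ} (he : ‖e‖ = 1)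
    {R r M : ℝ} (hab : dist a b ≤ r) (hR : 0 < R) (hr : r ≤ 2 * R)
    (hM : ∀ w ∈ ball a R ∪ ball b R, ‖Δ v w‖ ≤ M) :
    ‖cosFlux v a e R - cosFlux v b e R‖ ≤ 3 * π * r * M * R ^ 2 := by
  have he0 : e ≠ 0 := norm_ne_zero_iff.1 (he.trans_ne one_ne_zero)
  obtain ⟨a, rfl⟩ : ∃ a', e * a' = a := ⟨a / e, mul_div_cancel₀ a he0⟩
  obtain ⟨b, rfl⟩ : ∃ b', e * b' = b := ⟨b / e, mul_div_cancel₀ b he0⟩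
  have hdist : ∀ w c, dist (e * w) (e * c) = dist w c := fun w c => by
    rw [dist_eq_norm, ← mul_sub, norm_mul, he, one_mul, dist_eq_norm]
  have hΔ := continuous_laplacian hv
  rw [cosFlux_eq_setIntegral hv he a hR.le, cosFlux_eq_setIntegral hv he b hR.le]
  refine norm_setIntegral_ball_re_smul_sub_le (F := fun w => Δ v (e * w)) (by fun_prop)
    (hdist a b ▸ hab) hR hr fun w hw => hM _ (hw.imp ?_ ?_) <;> simp [hdist]

lemma norm_inv_smul_cosCoeff_sub_sub_le {v : ℂ → E} (hv : ContDiff ℝ 2 v) {a b e : ℂ}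
    (he : ‖e‖ = 1) {R r M : ℝ} (hab : dist a b ≤ r) (hr0 : 0 < r) (hr : r ≤ R)
    (hM : ∀ w ∈ ball a R ∪ ball b R, ‖Δ v w‖ ≤ M) :
    ‖(R⁻¹ • cosCoeff v a e R - R⁻¹ • cosCoeff v b e R) -
      (r⁻¹ • cosCoeff v a e r - r⁻¹ • cosCoeff v b e r)‖ ≤ 3 * π * r * M * (log R - log r) := by
  have hv1 : ContDiff ℝ 1 v := hv.of_le (by norm_num)
  have hpos : ∀ ρ ∈ Icc r R, 0 < ρ := fun ρ hρ => hr0.trans_le hρ.1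
  have hderiv : ∀ ρ ∈ Icc r R, HasDerivAt (fun ρ : ℝ =>
      (ρ⁻¹ • cosCoeff v a e ρ - ρ⁻¹ • cosCoeff v b e ρ) -
        (r⁻¹ • cosCoeff v a e r - r⁻¹ • cosCoeff v b e r))
      ((ρ ^ 3)⁻¹ • cosFlux v a e ρ - (ρ ^ 3)⁻¹ • cosFlux v b e ρ) ρ := fun ρ hρ =>
    ((hasDerivAt_inv_smul_cosCoeff hv1 a e (hpos ρ hρ).ne').sub
      (hasDerivAt_inv_smul_cosCoeff hv1 b e (hpos ρ hρ).ne')).sub_const _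
  have hlog : ∀ ρ ∈ Icc r R, HasDerivAt (fun ρ => 3 * π * r * M * (log ρ - log r))
      (3 * π * r * M * ρ⁻¹) ρ := fun ρ hρ =>
    ((hasDerivAt_log (hpos ρ hρ).ne').sub_const _).const_mul _
  refine image_norm_le_of_norm_deriv_right_le_deriv_boundary'
    (fun ρ hρ => (hderiv ρ hρ).continuousAt.continuousWithinAt)
    (fun ρ hρ => (hderiv ρ (Ico_subset_Icc_self hρ)).hasDerivWithinAt) (by simp)
    (fun ρ hρ => (hlog ρ hρ).continuousAt.continuousWithinAt)
    (fun ρ hρ => (hlog ρ (Ico_subset_Icc_self hρ)).hasDerivWithinAt) (fun ρ hρ => ?_)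
    (right_mem_Icc.2 hr)
  have hρ0 := hpos ρ (Ico_subset_Icc_self hρ)
  have hflux := norm_cosFlux_sub_cosFlux_le hv he hab hρ0 (by linarith [hρ.1]) fun w hw =>
    hM w (union_subset_union (ball_subset_ball hρ.2.le) (ball_subset_ball hρ.2.le) hw)
  rw [← smul_sub, norm_smul, norm_inv, norm_pow, norm_eq_abs, abs_of_pos hρ0,
    inv_mul_le_iff₀ (by positivity)]
  exact hflux.trans_eq (by field_simp)

lemma norm_inv_smul_cosCoeff_sub_le {v : ℂ → E} (hv : ContDiff ℝ 2 v) {c e : ℂ} (he : ‖e‖ = 1)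
    {R M : ℝ} (hR : 0 < R) (hM : ∀ w ∈ ball c R, ‖Δ v w‖ ≤ M) :
    ‖R⁻¹ • cosCoeff v c e R - π • fderiv ℝ v c e‖ ≤ 4 * M / 3 * R := by
  have hv1 : ContDiff ℝ 1 v := hv.of_le (by norm_num)
  have hlip : ∀ ρ ∈ Ioc 0 R, ‖R⁻¹ • cosCoeff v c e R - ρ⁻¹ • cosCoeff v c e ρ‖ ≤
      4 * M / 3 * ‖R - ρ‖ := fun ρ hρ => by
    refine (convex_Ioc 0 R).norm_image_sub_le_of_norm_hasDerivWithin_le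
      (fun σ hσ => (hasDerivAt_inv_smul_cosCoeff hv1 c e hσ.1.ne').hasDerivWithinAt)
      (fun σ hσ => ?_) hρ (right_mem_Ioc.2 hR)
    rw [norm_smul, norm_inv, norm_pow, norm_eq_abs, abs_of_pos hσ.1,
      inv_mul_le_iff₀ (pow_pos hσ.1 3), mul_comm]
    exact norm_cosFlux_le hv he hM ⟨hσ.1.le, hσ.2⟩
  have hlim : Tendsto (fun ρ : ℝ => 4 * M / 3 * ‖R - ρ‖) (nhdsWithin 0 (Ioi 0))
      (nhds (4 * M / 3 * ‖R - 0‖)) :=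
    tendsto_nhdsWithin_of_tendsto_nhds (Continuous.tendsto (by fun_prop) 0)
  rw [sub_zero, norm_eq_abs, abs_of_pos hR] at hlim
  refine le_of_tendsto_of_tendsto ((tendsto_inv_smul_cosCoeff hv1 c e).const_sub _).norm hlim ?_
  filter_upwards [Ioc_mem_nhdsGT hR] using hlip

end CentreEstimates

section LocalEstimates

open Real InnerProductSpace Laplacian

lemma exists_contDiff_eventuallyEq {E F : Type*} [NormedAddCommGroup E] [NormedSpace ℝ E]
    [HasContDiffBump E] [NormedAddCommGroup F] [NormedSpace ℝ F] {n : ℕ∞} {u : E → F} {c : E}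
    {ρ R : ℝ} (hu : ContDiffOn ℝ n u (ball c R)) (hρ : 0 < ρ) (hρR : ρ < R) :
    ∃ v : E → F, ContDiff ℝ n v ∧ ∀ w ∈ ball c ρ, v =ᶠ[nhds w] u := by
  let χ : ContDiffBump c := ⟨ρ, (ρ + R) / 2, hρ, by linarith⟩
  refine ⟨fun w => χ w • u w, contMDiff_iff_contDiff.1 <| contMDiff_of_tsupport
    fun w hw => contMDiffAt_iff_contDiffAt.2 ?_, fun w hw => ?_⟩
  · have hwR : w ∈ ball c R := closedBall_subset_ball (show (ρ + R) / 2 < R by linarith)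
      (χ.tsupport_eq ▸ tsupport_smul_subset_left χ u hw)
    exact χ.contDiffAt.smul (hu.contDiffAt (isOpen_ball.mem_nhds hwR))
  · filter_upwards [isOpen_ball.mem_nhds hw] with y hy
    rw [χ.one_of_mem_closedBall (ball_subset_closedBall hy), one_smul]

variable {E : Type*} [NormedAddCommGroup E] [NormedSpace ℝ E]

lemma add_smul_rot_mem_closedBall (c : ℂ) {e : ℂ} (he : ‖e‖ = 1) {ρ R : ℝ} (hρ : ρ ∈ Icc 0 R)
    (t : ℝ) : c + ρ • rot e t ∈ closedBall c R := by
  rw [mem_closedBall_iff_norm, add_sub_cancel_left, norm_smul_rot he, abs_of_nonneg hρ.1]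
  exact hρ.2

lemma cosCoeff_congr {u v : ℂ → E} {c e : ℂ} (he : ‖e‖ = 1) {ρ : ℝ} (hρ : 0 ≤ ρ)
    (huv : EqOn u v (closedBall c ρ)) : cosCoeff u c e ρ = cosCoeff v c e ρ := by
  simp only [cosCoeff, huv (add_smul_rot_mem_closedBall c he (right_mem_Icc.2 hρ) _)]

lemma continuousOn_cosCoeff {u : ℂ → E} {c e : ℂ} (he : ‖e‖ = 1) {R : ℝ}
    (hu : ContinuousOn u (closedBall c R)) : ContinuousOn (cosCoeff u c e) (Icc 0 R) := by
  rcases lt_or_ge R 0 with hR | hR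
  · simp [Icc_eq_empty hR.not_ge]
  have hcont : Continuous fun p : ℝ × ℝ => u (c + (projIcc 0 R hR p.1 : ℝ) • rot e p.2) :=
    hu.comp_continuous (by unfold rot; fun_prop) fun p =>
      add_smul_rot_mem_closedBall c he (projIcc 0 R hR p.1).2 p.2
  refine (intervalIntegral.continuous_parametric_intervalIntegral_of_continuous'
    (μ := volume) (f := fun ρ t => cos t • u (c + (projIcc 0 R hR ρ : ℝ) • rot e t))
    ((continuous_cos.comp continuous_snd).smul hcont) (-π) π).continuousOn.congr fun ρ hρ => ?_
  simp only [cosCoeff, projIcc_of_mem hR hρ]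

variable [CompleteSpace E]

lemma norm_inv_smul_cosCoeff_sub_le_of_continuousOn {u : ℂ → E} {c e : ℂ} (he : ‖e‖ = 1)
    {R M : ℝ} (hR : 0 < R) (hu : ContDiffOn ℝ 2 u (ball c R))
    (huc : ContinuousOn u (closedBall c R)) (hM : ∀ w ∈ ball c R, ‖Δ u w‖ ≤ M) :
    ‖R⁻¹ • cosCoeff u c e R - π • fderiv ℝ u c e‖ ≤ 4 * M / 3 * R := by
  have hlt : ∀ ρ ∈ Ioo 0 R, ‖ρ⁻¹ • cosCoeff u c e ρ - π • fderiv ℝ u c e‖ ≤ 4 * M / 3 * ρ := by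
    intro ρ hρ
    obtain ⟨v, hv, hvu⟩ := exists_contDiff_eventuallyEq (ρ := (ρ + R) / 2) hu
      (by linarith [hρ.1]) (by linarith [hρ.2])
    have hρ' : ρ < (ρ + R) / 2 := by linarith [hρ.2]
    have hest := norm_inv_smul_cosCoeff_sub_le hv he hρ.1 (c := c) (M := M) fun w hw => by
      rw [laplacian_congr_nhds (hvu w (ball_subset_ball hρ'.le hw)) |>.self_of_nhds]
      exact hM w (ball_subset_ball hρ.2.le hw)
    rwa [cosCoeff_congr he hρ.1.le fun w hw => (hvu w (closedBall_subset_ball hρ' hw)).eq_of_nhds,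
      (hvu c (mem_ball_self (hρ.1.trans hρ'))).fderiv_eq] at hest
  have hcoeff : ContinuousWithinAt (cosCoeff u c e) (Ioo 0 R) R :=
    (continuousOn_cosCoeff he huc R (right_mem_Icc.2 hR.le)).mono Ioo_subset_Icc_self
  have := right_nhdsWithin_Ioo_neBot hR
  refine le_of_tendsto_of_tendsto
    (((continuousWithinAt_id.inv₀ hR.ne').smul hcoeff).sub continuousWithinAt_const).norm
    (continuousWithinAt_const.mul continuousWithinAt_id) ?_
  filter_upwards [self_mem_nhdsWithin] using hlt

end LocalEstimates

section MaximumPrinciple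

open InnerProductSpace Laplacian

lemma deriv_deriv_nonpos_of_isLocalMax {k : ℝ → ℝ} {x : ℝ} (hk : IsLocalMax k x)
    (hc : ContinuousAt k x) : deriv (deriv k) x ≤ 0 := by
  by_contra! hpos
  have hmin : IsLocalMin k x := isLocalMin_of_deriv_deriv_pos hpos hk.deriv_eq_zero hc
  have hconst : k =ᶠ[nhds x] fun _ => k x := by
    filter_upwards [hk, hmin] with s hle hge using le_antisymm hle hge
  rw [hconst.deriv.deriv_eq] at hpos
  simp at hpos

lemma fderiv_fderiv_apply_self_nonpos_of_isLocalMax {V : Type*} [NormedAddCommGroup V]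
    [NormedSpace ℝ V] {k : V → ℝ} {x : V} (hmax : IsLocalMax k x) (hk : ContDiffAt ℝ 2 k x)
    (d : V) : fderiv ℝ (fderiv ℝ k) x d d ≤ 0 := by
  have hline : ∀ s : ℝ, HasDerivAt (fun s : ℝ => x + s • d) d s := fun s => by
    simpa using ((hasDerivAt_id s).smul_const d).const_add x
  have htendsto : Tendsto (fun s : ℝ => x + s • d) (nhds 0) (nhds x) := by
    simpa using (hline 0).continuousAt.tendsto
  have hfirst : deriv (fun s : ℝ => k (x + s • d)) =ᶠ[nhds 0]
      fun s => fderiv ℝ k (x + s • d) d := by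
    filter_upwards [htendsto.eventually (hk.eventually (by simp))] with s hs
    exact ((hs.differentiableAt (by norm_num)).hasFDerivAt.comp_hasDerivAt s (hline s)).deriv
  have hsecond : HasDerivAt (fun s : ℝ => fderiv ℝ k (x + s • d) d)
      (fderiv ℝ (fderiv ℝ k) x d d) 0 := by
    have hD : HasFDerivAt (fderiv ℝ k) (fderiv ℝ (fderiv ℝ k) x) (x + (0 : ℝ) • d) := by
      rw [zero_smul, add_zero]
      exact ((hk.fderiv_right (m := 1) (by norm_num)).differentiableAt (by norm_num)).hasFDerivAt
    have hline' : HasDerivAt (fun s : ℝ => fderiv ℝ k (x + s • d))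
        (fderiv ℝ (fderiv ℝ k) x d) 0 := hD.comp_hasDerivAt 0 (hline 0)
    simpa using hline'.clm_apply (hasDerivAt_const 0 d)
  rw [← hsecond.deriv, ← hfirst.deriv_eq]
  refine deriv_deriv_nonpos_of_isLocalMax ?_ (ContinuousAt.comp (by simpa using hk.continuousAt)
    (hline 0).continuousAt)
  filter_upwards [htendsto.eventually hmax] with s hs
  simpa using hs

lemma laplacian_nonpos_of_isLocalMax {V : Type*} [NormedAddCommGroup V] [InnerProductSpace ℝ V]
    [FiniteDimensional ℝ V] {k : V → ℝ} {x : V} (hmax : IsLocalMax k x)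
    (hk : ContDiffAt ℝ 2 k x) : Δ k x ≤ 0 := by
  rw [laplacian_eq_iteratedFDeriv_stdOrthonormalBasis]
  refine Finset.sum_nonpos fun i _ => ?_
  rw [iteratedFDeriv_two_apply]
  exact fderiv_fderiv_apply_self_nonpos_of_isLocalMax hmax hk _

lemma le_of_laplacian_pos {V : Type*} [NormedAddCommGroup V] [InnerProductSpace ℝ V]
    [FiniteDimensional ℝ V] {k : V → ℝ} {c : V} {R m : ℝ} (hk : ContDiffOn ℝ 2 k (ball c R))
    (hkc : ContinuousOn k (closedBall c R)) (hpos : ∀ z ∈ ball c R, 0 < Δ k z)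
    (hm : ∀ z ∈ sphere c R, k z ≤ m) {z : V} (hz : z ∈ closedBall c R) : k z ≤ m := by
  obtain ⟨x, hx, hmax⟩ := (isCompact_closedBall c R).exists_isMaxOn ⟨z, hz⟩ hkc
  refine (hmax hz).trans (hm x (((mem_closedBall.1 hx).eq_or_lt).resolve_right fun hlt => ?_))
  have hball : ball c R ∈ nhds x := isOpen_ball.mem_nhds hlt
  exact (hpos x hlt).not_ge (laplacian_nonpos_of_isLocalMax
    (hmax.isLocalMax (mem_of_superset hball ball_subset_closedBall)) (hk.contDiffAt hball))

lemma laplacian_norm_sq (z : ℂ) : Δ (fun w : ℂ => ‖w‖ ^ 2) z = 4 := by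
  have hderiv : fderiv ℝ (fderiv ℝ fun w : ℂ => ‖w‖ ^ 2) z = 2 • innerSL ℝ := by
    rw [fderiv_norm_sq]
    exact (2 • innerSL ℝ : ℂ →L[ℝ] ℂ →L[ℝ] ℝ).fderiv
  rw [laplacian_eq_fderiv_fderiv _ z norm_one, hderiv]
  change 2 • inner ℝ (1 : ℂ) 1 + 2 • inner ℝ (Complex.I * 1) (Complex.I * 1) = (4 : ℝ)
  norm_num [real_inner_self_eq_norm_sq]

lemma add_mul_norm_sq_le_of_neg_lt_laplacian {k : ℂ → ℝ} {R a m : ℝ}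
    (hk : ContDiffOn ℝ 2 k (ball 0 R)) (hkc : ContinuousOn k (closedBall 0 R))
    (ha : ∀ z ∈ ball 0 R, -(a * 4) < Δ k z) (hm : ∀ z ∈ sphere 0 R, k z ≤ m) {z : ℂ}
    (hz : z ∈ closedBall 0 R) : k z + a * ‖z‖ ^ 2 ≤ m + a * R ^ 2 := by
  have hsq : ContDiff ℝ 2 (a • fun w : ℂ => ‖w‖ ^ 2) := contDiff_const.smul (contDiff_norm_sq ℝ)
  refine le_of_laplacian_pos (k := k + a • fun w : ℂ => ‖w‖ ^ 2) (hk.add hsq.contDiffOn)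
    (hkc.add hsq.continuous.continuousOn) (fun w hw => ?_) (fun w hw => ?_) hz
  · rw [(hk.contDiffAt (isOpen_ball.mem_nhds hw)).laplacian_add hsq.contDiffAt,
      laplacian_smul _ (contDiff_norm_sq ℝ).contDiffAt, laplacian_norm_sq, smul_eq_mul]
    exact neg_lt_iff_pos_add.1 (ha w hw)
  · rw [← mem_sphere_zero_iff_norm.1 hw]
    exact add_le_add_left (hm w hw) _

lemma norm_le_of_norm_laplacian_le {E : Type*} [NormedAddCommGroup E] [NormedSpace ℝ E]
    {u : ℂ → E} {R M ε : ℝ} (hu : ContDiffOn ℝ 2 u (ball 0 R))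
    (huc : ContinuousOn u (closedBall 0 R)) (hM : ∀ z ∈ ball 0 R, ‖Δ u z‖ ≤ M)
    (hε : ∀ z ∈ sphere 0 R, ‖u z‖ ≤ ε) {z : ℂ} (hz : z ∈ closedBall 0 R) :
    ‖u z‖ ≤ ε + M * (R ^ 2 - ‖z‖ ^ 2) / 4 := by
  obtain ⟨l, hl, hlz⟩ := exists_dual_vector'' ℝ (u z)
  have hl_le : ∀ w, ‖l w‖ ≤ ‖w‖ := fun w => (l.le_opNorm w).trans
    (mul_le_of_le_one_left (norm_nonneg w) hl)
  have hδ : ∀ δ > 0, ‖u z‖ + (M / 4 + δ) * ‖z‖ ^ 2 ≤ ε + (M / 4 + δ) * R ^ 2 := fun δ hδ => by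
    have h := add_mul_norm_sq_le_of_neg_lt_laplacian (k := l ∘ u) (a := M / 4 + δ)
      (l.contDiff.comp_contDiffOn hu) (l.continuous.comp_continuousOn huc) (fun w hw => ?_)
      (fun w hw => (le_abs_self _).trans ((hl_le _).trans (hε w hw))) hz
    · simpa [hlz] using h
    · rw [(hu.contDiffAt (isOpen_ball.mem_nhds hw)).laplacian_CLM_comp_left, Function.comp_apply]
      linarith [neg_le_of_abs_le ((hl_le (Δ u w)).trans (hM w hw))]
  have hlim : Tendsto (fun δ : ℝ => ε + (M / 4 + δ) * R ^ 2 - (M / 4 + δ) * ‖z‖ ^ 2)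
      (nhdsWithin 0 (Ioi 0)) (nhds (ε + (M / 4 + 0) * R ^ 2 - (M / 4 + 0) * ‖z‖ ^ 2)) :=
    tendsto_nhdsWithin_of_tendsto_nhds (Continuous.tendsto (by fun_prop) 0)
  refine (ge_of_tendsto hlim ?_).trans_eq (by ring)
  filter_upwards [self_mem_nhdsWithin] with δ hδ0 using le_sub_iff_add_le.2 (hδ δ hδ0)

end MaximumPrinciple

section GradientEstimates

open Real InnerProductSpace Laplacian

variable {E : Type*} [NormedAddCommGroup E] [NormedSpace ℝ E]

lemma norm_add_smul_rot_sq (z : ℂ) {e : ℂ} (he : ‖e‖ = 1) (ρ t : ℝ) :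
    ‖z + ρ • rot e t‖ ^ 2 = ‖z‖ ^ 2 + ρ ^ 2 + 2 * ρ * inner ℝ z e * cos t +
      2 * ρ * inner ℝ z (Complex.I * e) * sin t := by
  rw [norm_add_sq_real, norm_smul_rot he, sq_abs, rot_eq_cos_add_sin, real_inner_smul_right,
    inner_add_right, real_inner_smul_right, real_inner_smul_right]
  ring

lemma norm_cosCoeff_sub_cosCoeff_le {v : ℂ → E} (hv : Continuous v) {a b e : ℂ} {ρ K : ℝ}
    (hK : ∀ t, ‖v (a + ρ • rot e t) - v (b + ρ • rot e t)‖ ≤ K) :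
    ‖cosCoeff v a e ρ - cosCoeff v b e ρ‖ ≤ 4 * K := by
  rw [cosCoeff, cosCoeff, ← intervalIntegral.integral_sub
    (Continuous.intervalIntegrable (by fun_prop) _ _)
    (Continuous.intervalIntegrable (by fun_prop) _ _)]
  simpa only [smul_sub] using norm_integral_cos_smul_le hK

variable [CompleteSpace E]

lemma pi_mul_norm_fderiv_sub_fderiv_apply_le {v : ℂ → E} (hv : ContDiff ℝ 2 v) {a b e : ℂ}
    (he : ‖e‖ = 1) {r R M K : ℝ} (hab : dist a b ≤ r) (hr0 : 0 < r) (hr : r ≤ R)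
    (hM : ∀ w ∈ ball a R ∪ ball b R, ‖Δ v w‖ ≤ M)
    (hK : ∀ t, ‖v (a + R • rot e t) - v (b + R • rot e t)‖ ≤ K) :
    π * ‖fderiv ℝ v a e - fderiv ℝ v b e‖ ≤
      4 * K / R + 3 * π * r * M * (log R - log r) + 8 * M / 3 * r := by
  have hR : 0 < R := hr0.trans_le hr
  set Φ : ℂ → ℝ → E := fun c ρ => ρ⁻¹ • cosCoeff v c e ρ
  have hcentre : ∀ c, ball c R ⊆ ball a R ∪ ball b R →
      ‖Φ c r - π • fderiv ℝ v c e‖ ≤ 4 * M / 3 * r := fun c hc =>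
    norm_inv_smul_cosCoeff_sub_le hv he hr0 fun w hw => hM w (hc (ball_subset_ball hr hw))
  have ha := hcentre a subset_union_left
  have hb := hcentre b subset_union_right
  have hscale := norm_inv_smul_cosCoeff_sub_sub_le hv he hab hr0 hr hM
  have hcoeff : ‖Φ a R - Φ b R‖ ≤ 4 * K / R := by
    rw [← smul_sub, norm_smul, norm_inv, norm_of_nonneg hR.le, ← div_eq_inv_mul]
    gcongr
    exact norm_cosCoeff_sub_cosCoeff_le hv.continuous hK
  calc π * ‖fderiv ℝ v a e - fderiv ℝ v b e‖
      = ‖(Φ a R - Φ b R) - ((Φ a R - Φ b R) - (Φ a r - Φ b r)) -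
          ((Φ a r - π • fderiv ℝ v a e) - (Φ b r - π • fderiv ℝ v b e))‖ := by
        rw [← norm_of_nonneg pi_pos.le, ← norm_smul, norm_of_nonneg pi_pos.le, smul_sub]
        congr 1
        abel
    _ ≤ 4 * K / R + 3 * π * r * M * (log R - log r) + (4 * M / 3 * r + 4 * M / 3 * r) :=
        norm_sub_le_of_le (norm_sub_le_of_le hcoeff hscale) (norm_sub_le_of_le ha hb)
    _ = 4 * K / R + 3 * π * r * M * (log R - log r) + 8 * M / 3 * r := by ring

lemma pi_mul_norm_fderiv_sub_fderiv_zero_apply_le {v : ℂ → E} (hv : ContDiff ℝ 2 v) {e z : ℂ}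
    (he : ‖e‖ = 1) {r M D : ℝ} (hz : ‖z‖ ≤ r) (hr0 : 0 < r) (hr : r ≤ 1 / 4)
    (hM : ∀ w ∈ ball 0 (3 / 4), ‖Δ v w‖ ≤ M)
    (hD : ∀ w ∈ closedBall 0 (3 / 4), ‖fderiv ℝ v w‖ ≤ D) :
    π * ‖fderiv ℝ v z e - fderiv ℝ v 0 e‖ ≤
      8 * D * r - 3 * π * r * M * log (2 * r) + 8 * M / 3 * r := by
  have hz0 : ∀ c ∈ ({z, 0} : Set ℂ), 1 / 2 + dist c 0 ≤ 3 / 4 := by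
    rintro c (rfl | rfl)
    · rw [dist_zero_right]
      linarith
    · norm_num
  have hD0 : 0 ≤ D := (norm_nonneg _).trans (hD 0 (mem_closedBall_self (by norm_num)))
  have hlip : ∀ t, ‖v (z + (1 / 2 : ℝ) • rot e t) - v (0 + (1 / 2 : ℝ) • rot e t)‖ ≤ D * r :=
    fun t => by
    have hmem : ∀ c ∈ ({z, 0} : Set ℂ), c + (1 / 2 : ℝ) • rot e t ∈ closedBall 0 (3 / 4) :=
      fun c hc => closedBall_subset_closedBall' (hz0 c hc)
        (add_smul_rot_mem_closedBall c he (right_mem_Icc.2 (by norm_num)) t)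
    refine ((convex_closedBall (0 : ℂ) (3 / 4)).norm_image_sub_le_of_norm_fderiv_le (𝕜 := ℝ)
      (fun w _ => hv.differentiable (by norm_num) w) hD (hmem 0 (by simp))
      (hmem z (by simp))).trans ?_
    rw [add_sub_add_right_eq_sub, sub_zero]
    gcongr
  have hballs : ball z (1 / 2) ∪ ball 0 (1 / 2) ⊆ ball 0 (3 / 4) :=
    union_subset (ball_subset_ball' (hz0 z (by simp))) (ball_subset_ball' (hz0 0 (by simp)))
  have hest := pi_mul_norm_fderiv_sub_fderiv_apply_le hv he (M := M) (by simpa using hz) hr0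
    (by linarith) (fun w hw => hM w (hballs hw)) hlip
  have hlog : log (1 / 2) - log r = -log (2 * r) := by
    rw [log_mul two_ne_zero hr0.ne', one_div, log_inv]
    ring
  rw [hlog] at hest
  exact hest.trans_eq (by ring)

section UnitDisk

variable {u : ℂ → E} {M ε : ℝ} (hu : ContDiffOn ℝ 2 u (ball 0 1))
  (huc : ContinuousOn u (closedBall 0 1)) (hM : ∀ z ∈ ball 0 1, ‖Δ u z‖ ≤ M)
  (hε : ∀ z ∈ sphere 0 1, ‖u z‖ ≤ ε)

include hu huc hM hε

lemma norm_fderiv_le_of_norm_laplacian_le {z : ℂ} (hz : z ∈ ball 0 1) :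
    ‖fderiv ℝ u z‖ ≤ (4 * ε / (1 - ‖z‖) + M * (4 + 2 * ‖z‖) / 3) / π := by
  have hR : 0 < 1 - ‖z‖ := sub_pos.2 (mem_ball_zero_iff.1 hz)
  set R := 1 - ‖z‖ with hRz
  have hM0 : 0 ≤ M := (norm_nonneg _).trans (hM z hz)
  have hε0 : 0 ≤ ε := (norm_nonneg _).trans (hε 1 (by simp))
  have hball : closedBall z R ⊆ closedBall 0 1 :=
    closedBall_subset_closedBall' (by rw [dist_zero_right]; linarith)
  refine ContinuousLinearMap.opNorm_le_of_unit_norm (by positivity) fun e he => ?_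
  have hcentre := norm_inv_smul_cosCoeff_sub_le_of_continuousOn he hR
    (hu.mono (ball_subset_ball' (by rw [dist_zero_right]; linarith))) (huc.mono hball)
    fun w hw => hM w (ball_subset_ball' (by rw [dist_zero_right]; linarith) hw)
  have hcoeff : ‖cosCoeff u z e R‖ ≤ 4 * (ε + M * ‖z‖ * R / 2) := by
    refine norm_integral_cos_smul_le_of_affine_trig
      (x := -(M * R / 2 * inner ℝ z e)) (y := -(M * R / 2 * inner ℝ z (Complex.I * e))) fun t => ?_
    have hmax := norm_le_of_norm_laplacian_le hu huc hM hε
      (hball (add_smul_rot_mem_closedBall z he (right_mem_Icc.2 hR.le) t))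
    rw [norm_add_smul_rot_sq z he] at hmax
    refine hmax.trans_eq ?_
    rw [show ‖z‖ = 1 - R by rw [hRz]; ring]
    ring
  have hπ : π * ‖fderiv ℝ u z e‖ ≤ R⁻¹ * ‖cosCoeff u z e R‖ + 4 * M / 3 * R := by
    rw [← norm_of_nonneg pi_pos.le, ← norm_smul, ← norm_of_nonneg (inv_pos.2 hR).le, ← norm_smul]
    exact norm_le_norm_add_norm_sub' _ _ |>.trans (by gcongr; rwa [norm_sub_rev])
  rw [le_div_iff₀' pi_pos]
  calc π * ‖fderiv ℝ u z e‖ ≤ R⁻¹ * (4 * (ε + M * ‖z‖ * R / 2)) + 4 * M / 3 * R :=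
        hπ.trans (by gcongr)
    _ = 4 * ε / R + M * (4 + 2 * ‖z‖) / 3 := by
        rw [show ‖z‖ = 1 - R by rw [hRz]; ring]
        field_simp
        ring

lemma norm_fderiv_le_of_mem_closedBall {w : ℂ} (hw : w ∈ closedBall 0 (3 / 4)) :
    ‖fderiv ℝ u w‖ ≤ (16 * ε + 2 * M) / π := by
  have hw' : ‖w‖ ≤ 3 / 4 := mem_closedBall_zero_iff.1 hw
  have hM0 : 0 ≤ M := (norm_nonneg _).trans (hM 0 (by simp))
  have hε0 : 0 ≤ ε := (norm_nonneg _).trans (hε 1 (by simp))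
  refine (norm_fderiv_le_of_norm_laplacian_le hu huc hM hε
    (mem_ball_zero_iff.2 (by linarith))).trans ?_
  have h4 : 4 * ε / (1 - ‖w‖) ≤ 16 * ε := by
    rw [div_le_iff₀ (by linarith)]
    nlinarith
  gcongr
  nlinarith

lemma norm_fderiv_sub_fderiv_zero_le_of_le_quarter {z : ℂ} {r : ℝ} (hz : ‖z‖ ≤ r) (hr0 : 0 < r)
    (hr : r ≤ 1 / 4) :
    ‖fderiv ℝ u z - fderiv ℝ u 0‖ ≤ 3 * M * r * (1 - log (2 * r)) + 4 * ε := by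
  have hM0 : 0 ≤ M := (norm_nonneg _).trans (hM 0 (by simp))
  have hε0 : 0 ≤ ε := (norm_nonneg _).trans (hε 1 (by simp))
  have hlog : 0 ≤ 1 - log (2 * r) := by
    linarith [log_nonpos (x := 2 * r) (by linarith) (by linarith)]
  obtain ⟨v, hv, hvu⟩ := exists_contDiff_eventuallyEq (ρ := 7 / 8) hu (by norm_num) (by norm_num)
  have hvM : ∀ w ∈ ball 0 (3 / 4), ‖Δ v w‖ ≤ M := fun w hw => by
    rw [laplacian_congr_nhds (hvu w (ball_subset_ball (by norm_num) hw)) |>.self_of_nhds]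
    exact hM w (ball_subset_ball (by norm_num) hw)
  have hvD : ∀ w ∈ closedBall 0 (3 / 4), ‖fderiv ℝ v w‖ ≤ (16 * ε + 2 * M) / π := fun w hw => by
    rw [(hvu w (closedBall_subset_ball (by norm_num) hw)).fderiv_eq]
    exact norm_fderiv_le_of_mem_closedBall hu huc hM hε hw
  rw [← (hvu z (mem_ball_zero_iff.2 (by linarith))).fderiv_eq,
    ← (hvu 0 (mem_ball_self (by norm_num))).fderiv_eq]
  refine ContinuousLinearMap.opNorm_le_of_unit_norm (by positivity) fun e he => ?_
  have hest := pi_mul_norm_fderiv_sub_fderiv_zero_apply_le hv he hz hr0 hr hvM hvD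
  have hDr : (16 * ε + 2 * M) / π * r ≤ (16 * ε + 2 * M) / 3 * r := by
    gcongr
    exact pi_gt_three.le
  refine le_of_mul_le_mul_left (hest.trans ?_) pi_pos
  nlinarith [mul_le_mul_of_nonneg_left hr hε0,
    mul_le_mul_of_nonneg_right pi_gt_three.le (mul_nonneg hM0 hr0.le),
    mul_le_mul_of_nonneg_right pi_gt_three.le hε0]

lemma norm_fderiv_sub_fderiv_zero_le_four_thirds_mul_add {z : ℂ} {r : ℝ} (hz : ‖z‖ ≤ r)
    (hr : r < 1) : ‖fderiv ℝ u z - fderiv ℝ u 0‖ ≤ 4 / 3 * M + 4 * ε / (1 - r) := by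
  have hM0 : 0 ≤ M := (norm_nonneg _).trans (hM 0 (by simp))
  have hε0 : 0 ≤ ε := (norm_nonneg _).trans (hε 1 (by simp))
  have : 0 < 1 - r := sub_pos.2 hr
  have hgrad : ∀ {w : ℂ}, ‖w‖ ≤ r → ‖fderiv ℝ u w‖ ≤ (4 * ε / (1 - r) + M * 2) / 3 := fun hw =>
    (norm_fderiv_le_of_norm_laplacian_le hu huc hM hε
      (mem_ball_zero_iff.2 (hw.trans_lt hr))).trans <| by
        gcongr ?_ / ?_
        · gcongr
          nlinarith
        · exact pi_gt_three.le
  have hεr : 0 ≤ 4 * ε / (1 - r) := by positivity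
  have hzero : ‖(0 : ℂ)‖ ≤ r := norm_zero.trans_le ((norm_nonneg z).trans hz)
  linarith [norm_sub_le_of_le (hgrad hz) (hgrad hzero)]

lemma norm_fderiv_sub_fderiv_zero_le {z : ℂ} {r : ℝ} (hz : ‖z‖ ≤ r) (hr0 : 0 < r) (hr1 : r < 1) :
    ‖fderiv ℝ u z - fderiv ℝ u 0‖ ≤
      2 * M * (log (4 * (1 + r)) - log r) * ((2 + r) * r) + 4 * ε / (1 - r) := by
  have hM0 : 0 ≤ M := (norm_nonneg _).trans (hM 0 (by simp))
  have hε0 : 0 ≤ ε := (norm_nonneg _).trans (hε 1 (by simp))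
  have hlog : log r ≤ 0 := log_nonpos hr0.le hr1.le
  have hlog2 : 0.69 < log 2 := by linarith [log_two_gt_d9]
  have hlog4 : 2 * log 2 ≤ log (4 * (1 + r)) := by
    rw [← log_rpow two_pos]
    exact log_le_log (by norm_num) (by norm_num; linarith)
  rcases le_or_gt r (1 / 4) with hr | hr
  · refine (norm_fderiv_sub_fderiv_zero_le_of_le_quarter hu huc hM hε hz hr0 hr).trans
      (add_le_add ?_ (le_div_self (by positivity) (by linarith) (by linarith)))
    rw [log_mul two_ne_zero hr0.ne']
    have hweight : 3 * (1 - (log 2 + log r)) ≤ 2 * (log (4 * (1 + r)) - log r) * (2 + r) := by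
      nlinarith
    nlinarith [mul_le_mul_of_nonneg_left hweight (mul_nonneg hM0 hr0.le)]
  · refine (norm_fderiv_sub_fderiv_zero_le_four_thirds_mul_add hu huc hM hε hz hr1).trans
      (add_le_add_left ?_ _)
    have hr2 : 9 / 16 ≤ (2 + r) * r := by nlinarith
    have hweight : 4 / 3 ≤ 2 * (log (4 * (1 + r)) - log r) * ((2 + r) * r) := by nlinarith
    linarith [mul_le_mul_of_nonneg_left hweight hM0]

end UnitDisk
end GradientEstimates

section HarmonicFunctions

open InnerProductSpace
open scoped Real ComplexConjugate

/-- The complex-valued harmonic function `F + conj G` with holomorphic part `F` and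
anti-holomorphic part `conj G`. -/
def harmonicOf (F G : ℂ → ℂ) (w : ℂ) : ℂ := F w + conj (G w)

lemma harmonicAt_harmonicOf {F G : ℂ → ℂ} {z : ℂ} (hF : AnalyticAt ℂ F z)
    (hG : AnalyticAt ℂ G z) : HarmonicAt (harmonicOf F G) z :=
  hF.harmonicAt.add hG.harmonicAt_conj

lemma fderiv_harmonicOf_apply {F G : ℂ → ℂ} {z : ℂ} (hF : DifferentiableAt ℂ F z)
    (hG : DifferentiableAt ℂ G z) (e : ℂ) :
    fderiv ℝ (harmonicOf F G) z e = deriv F z * e + conj (deriv G z * e) := by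
  have hF' := hF.hasDerivAt.hasFDerivAt.restrictScalars ℝ
  have hG' := hG.hasDerivAt.hasFDerivAt.restrictScalars ℝ
  have h : HasFDerivAt (harmonicOf F G) _ z :=
    hF'.add (Complex.conjCLE.toContinuousLinearMap.hasFDerivAt.comp z hG')
  rw [h.fderiv]
  simp [mul_comm]

lemma norm_fderiv_zero_le_of_harmonicContOnCl {E : Type*} [NormedAddCommGroup E] [NormedSpace ℝ E]
    [CompleteSpace E] {h : ℂ → E} {N : ℝ} (hh : HarmonicContOnCl h (ball 0 1))
    (hN : ∀ w ∈ sphere 0 1, ‖h w‖ ≤ N) : ‖fderiv ℝ h 0‖ ≤ 4 * N / π := by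
  simpa using norm_fderiv_le_of_norm_laplacian_le hh.harmonicOnNhd.contDiffOn hh.continuousOn_ball
    (M := 0) (fun z hz => by simp [(hh.harmonicOnNhd z hz).2.self_of_nhds]) hN
    (mem_ball_self one_pos)

/-- The automorphism `w ↦ (w + z) / (1 + conj z w)` of the unit disk, which maps `0` to `z`. -/
def diskShift (z w : ℂ) : ℂ := (w + z) / (1 + conj z * w)

lemma one_add_conj_mul_ne_zero {z w : ℂ} (hz : z ∈ ball 0 1) (hw : w ∈ closedBall 0 1) :
    1 + conj z * w ≠ 0 := by
  rw [mem_ball_zero_iff] at hz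
  rw [mem_closedBall_zero_iff] at hw
  intro h
  have hone : ‖z‖ * ‖w‖ = 1 := by
    rw [← RCLike.norm_conj z, ← norm_mul, eq_neg_of_add_eq_zero_right h, norm_neg, norm_one]
  nlinarith [norm_nonneg z, norm_nonneg w]

lemma diskShift_zero (z : ℂ) : diskShift z 0 = z := by simp [diskShift]

lemma analyticAt_diskShift {z w : ℂ} (hz : z ∈ ball 0 1) (hw : w ∈ closedBall 0 1) :
    AnalyticAt ℂ (diskShift z) w :=
  AnalyticAt.div (by fun_prop) (by fun_prop) (one_add_conj_mul_ne_zero hz hw)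

lemma hasDerivAt_diskShift_zero (z : ℂ) : HasDerivAt (diskShift z) (1 - ‖z‖ ^ 2 : ℝ) 0 := by
  have hden : HasDerivAt (fun w : ℂ => 1 + conj z * w) (conj z * 1) 0 :=
    ((hasDerivAt_id (0 : ℂ)).const_mul _).const_add 1
  refine (((hasDerivAt_id (0 : ℂ)).add_const z).div hden (by simp)).congr_deriv ?_
  simp [← Complex.mul_conj']

lemma norm_sq_sub_norm_sq_diskShift (z w : ℂ) :
    ‖1 + conj z * w‖ ^ 2 - ‖w + z‖ ^ 2 = (1 - ‖z‖ ^ 2) * (1 - ‖w‖ ^ 2) := by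
  simp only [Complex.sq_norm, Complex.normSq_apply, Complex.add_re, Complex.add_im,
    Complex.mul_re, Complex.mul_im, Complex.conj_re, Complex.conj_im, Complex.one_re,
    Complex.one_im]
  ring

lemma diskShift_mem_closedBall {z w : ℂ} (hz : z ∈ ball 0 1) (hw : w ∈ closedBall 0 1) :
    diskShift z w ∈ closedBall 0 1 := by
  rw [mem_closedBall_zero_iff, diskShift, norm_div]
  refine div_le_one_of_le₀ ((sq_le_sq₀ (norm_nonneg _) (norm_nonneg _)).1 (sub_nonneg.1 ?_))
    (norm_nonneg _)
  rw [mem_ball_zero_iff] at hz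
  rw [mem_closedBall_zero_iff] at hw
  rw [norm_sq_sub_norm_sq_diskShift]
  exact mul_nonneg (by nlinarith [norm_nonneg z]) (by nlinarith [norm_nonneg w])

lemma diskShift_mem_sphere {z w : ℂ} (hz : z ∈ ball 0 1) (hw : w ∈ sphere 0 1) :
    diskShift z w ∈ sphere 0 1 := by
  have h := norm_sq_sub_norm_sq_diskShift z w
  rw [mem_sphere_zero_iff_norm.1 hw, one_pow, sub_self, mul_zero, sub_eq_zero,
    sq_eq_sq₀ (norm_nonneg _) (norm_nonneg _)] at h
  rw [mem_sphere_zero_iff_norm, diskShift, norm_div, h, div_self]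
  rw [← h]
  exact norm_ne_zero_iff.2 (one_add_conj_mul_ne_zero hz (sphere_subset_closedBall hw))

lemma norm_fderiv_harmonicOf_le {F G : ℂ → ℂ} {N : ℝ} (hF : AnalyticOnNhd ℂ F (closedBall 0 1))
    (hG : AnalyticOnNhd ℂ G (closedBall 0 1)) (hN : ∀ w ∈ sphere 0 1, ‖harmonicOf F G w‖ ≤ N)
    {z : ℂ} (hz : z ∈ ball 0 1) :
    ‖fderiv ℝ (harmonicOf F G) z‖ ≤ 4 * N / π * (1 / (1 - ‖z‖ ^ 2)) := by
  have hpos : 0 < 1 - ‖z‖ ^ 2 := by nlinarith [norm_nonneg z, mem_ball_zero_iff.1 hz]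
  have hcomp : ∀ {F : ℂ → ℂ}, AnalyticOnNhd ℂ F (closedBall 0 1) →
      AnalyticOnNhd ℂ (F ∘ diskShift z) (closedBall 0 1) := fun hF w hw =>
    (hF _ (diskShift_mem_closedBall hz hw)).comp (analyticAt_diskShift hz hw)
  have hharm : HarmonicContOnCl (harmonicOf F G ∘ diskShift z) (ball 0 1) := by
    refine HarmonicOnNhd.harmonicContOnCl fun w hw => ?_
    rw [closure_ball _ one_ne_zero] at hw
    exact harmonicAt_harmonicOf (hcomp hF w hw) (hcomp hG w hw)
  have hderiv : fderiv ℝ (harmonicOf F G ∘ diskShift z) 0 =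
      (1 - ‖z‖ ^ 2) • fderiv ℝ (harmonicOf F G) z := by
    have hφ := (hasDerivAt_diskShift_zero z).hasFDerivAt.restrictScalars ℝ
    have hh : HasFDerivAt (harmonicOf F G) (fderiv ℝ (harmonicOf F G) z) (diskShift z 0) := by
      have hz' := ball_subset_closedBall hz
      rw [diskShift_zero]
      exact ((harmonicAt_harmonicOf (hF z hz') (hG z hz')).1.differentiableAt
        (by norm_num)).hasFDerivAt
    refine ContinuousLinearMap.ext fun e => ?_
    rw [(hh.comp 0 hφ).fderiv, _root_.smul_apply, ← map_smul, Complex.real_smul, mul_comm]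
    simp
  have h0 := norm_fderiv_zero_le_of_harmonicContOnCl hharm
    fun w hw => hN _ (diskShift_mem_sphere hz hw)
  rwa [hderiv, norm_smul, Real.norm_of_nonneg hpos.le, ← le_div_iff₀' hpos,
    div_eq_mul_one_div] at h0

end HarmonicFunctions

section HarmonicPolynomials

open Polynomial InnerProductSpace
open scoped Real ComplexConjugate

lemma integral_exp_intCast_mul_I (k : ℤ) :
    ∫ t in (-π)..π, Complex.exp (k * Complex.I * t) = if k = 0 then 2 * (π : ℂ) else 0 := by
  split_ifs with hk
  · simp only [hk, Int.cast_zero, zero_mul, Complex.exp_zero, intervalIntegral.integral_const]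
    simp [two_mul]
  · have hperiod : Complex.exp (k * Complex.I * π) = Complex.exp (k * Complex.I * (-π : ℝ)) :=
      Complex.exp_eq_exp_iff_exists_int.2 ⟨k, by push_cast; ring⟩
    rw [integral_exp_mul_complex (by simp [hk]), hperiod, sub_self, zero_div]

lemma cos_nat_mul_smul_rot_pow (e : ℂ) (n m : ℕ) (t : ℝ) :
    Real.cos (n * t) • rot e t ^ m =
      e ^ m / 2 * Complex.exp ((m + n : ℤ) * Complex.I * t) +
        e ^ m / 2 * Complex.exp ((m - n : ℤ) * Complex.I * t) := by
  have hadd : Complex.exp ((m + n : ℤ) * Complex.I * t) =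
      Complex.exp (m * (t * Complex.I)) * Complex.exp ((n * t : ℝ) * Complex.I) := by
    rw [← Complex.exp_add]; push_cast; ring_nf
  have hsub : Complex.exp ((m - n : ℤ) * Complex.I * t) =
      Complex.exp (m * (t * Complex.I)) * Complex.exp (-(n * t : ℝ) * Complex.I) := by
    rw [← Complex.exp_add]; push_cast; ring_nf
  rw [hadd, hsub, rot, Complex.real_smul, Complex.ofReal_cos, Complex.cos, mul_pow,
    ← Complex.exp_nat_mul]
  ring

lemma integral_cos_nat_mul_smul_rot_pow {n : ℕ} (hn : n ≠ 0) (e : ℂ) (m : ℕ) :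
    ∫ t in (-π)..π, Real.cos (n * t) • rot e t ^ m = if m = n then π * e ^ m else 0 := by
  simp only [cos_nat_mul_smul_rot_pow]
  rw [intervalIntegral.integral_add (Continuous.intervalIntegrable (by fun_prop) _ _)
      (Continuous.intervalIntegrable (by fun_prop) _ _), intervalIntegral.integral_const_mul,
    intervalIntegral.integral_const_mul, integral_exp_intCast_mul_I, integral_exp_intCast_mul_I,
    if_neg (by lia)]
  split_ifs <;> first | lia | ring

lemma integral_cos_nat_mul_smul_eval_rot (A : ℂ[X]) {n : ℕ} (hn : n ≠ 0) (e : ℂ) :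
    ∫ t in (-π)..π, Real.cos (n * t) • A.eval (rot e t) = π * (A.coeff n * e ^ n) := by
  have hcont (p : ℂ[X]) :
      IntervalIntegrable (fun t => Real.cos (n * t) • p.eval (rot e t)) volume (-π) π := by
    have := p.continuous
    exact Continuous.intervalIntegrable (by fun_prop) _ _
  induction A using Polynomial.induction_on' with
  | add p q hp hq =>
    simp only [eval_add, smul_add, coeff_add]
    rw [intervalIntegral.integral_add (hcont p) (hcont q), hp, hq]
    ring
  | monomial m c =>
    simp only [eval_monomial, coeff_monomial, ← mul_smul_comm]
    rw [intervalIntegral.integral_const_mul, integral_cos_nat_mul_smul_rot_pow hn]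
    split_ifs with h
    · rw [h]; ring
    · simp

lemma integral_cos_nat_mul_smul_harmonicOf_rot (A B : ℂ[X]) {n : ℕ} (hn : n ≠ 0) (e : ℂ) :
    ∫ t in (-π)..π, Real.cos (n * t) • harmonicOf A.eval B.eval (rot e t) =
      π • (A.coeff n * e ^ n + conj (B.coeff n * e ^ n)) := by
  have := A.continuous
  have := B.continuous
  have hconj : ∫ t in (-π)..π, Real.cos (n * t) • conj (B.eval (rot e t)) =
      conj (∫ t in (-π)..π, Real.cos (n * t) • B.eval (rot e t)) := by
    simp only [intervalIntegral.integral_of_le (neg_le_self Real.pi_pos.le), ← integral_conj,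
      Complex.real_smul, map_mul, Complex.conj_ofReal]
  simp only [harmonicOf, smul_add]
  rw [intervalIntegral.integral_add (Continuous.intervalIntegrable (by fun_prop) _ _)
      (Continuous.intervalIntegrable (by fun_prop) _ _), hconj,
    integral_cos_nat_mul_smul_eval_rot A hn, integral_cos_nat_mul_smul_eval_rot B hn]
  simp

section
variable {A B : ℂ[X]} {N : ℝ} (hN : ∀ w ∈ sphere 0 1, ‖harmonicOf A.eval B.eval w‖ ≤ N)
include hN

lemma norm_coeff_mul_pow_add_conj_le {n : ℕ} (hn : n ≠ 0) {e : ℂ} (he : ‖e‖ = 1) :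
    ‖A.coeff n * e ^ n + conj (B.coeff n * e ^ n)‖ ≤ 4 * N / π := by
  have h := norm_integral_cos_nat_mul_smul_le
    (fun t => hN (rot e t) (mem_sphere_zero_iff_norm.2 (norm_rot he t))) hn
  rwa [integral_cos_nat_mul_smul_harmonicOf_rot A B hn, norm_smul,
    Real.norm_of_nonneg Real.pi_pos.le, ← le_div_iff₀' Real.pi_pos] at h

lemma norm_coeff_mul_add_conj_le {n : ℕ} (hn : n ≠ 0) (ζ : ℂ) :
    ‖A.coeff n * ζ + conj (B.coeff n * ζ)‖ ≤ 4 * N / π * ‖ζ‖ := by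
  rcases eq_or_ne ζ 0 with rfl | hζ
  · simp
  obtain ⟨e, he⟩ := IsAlgClosed.exists_pow_nat_eq (ζ / ‖ζ‖) (Nat.pos_of_ne_zero hn)
  have he1 : ‖e‖ = 1 := by
    rw [← pow_eq_one_iff_of_nonneg (norm_nonneg _) hn, ← norm_pow, he]
    simp [hζ]
  have hpolar : ζ = ‖ζ‖ • e ^ n := by
    rw [he, Complex.real_smul, mul_div_cancel₀ _ (by simpa using hζ)]
  have hscale : A.coeff n * ζ + conj (B.coeff n * ζ) =
      ‖ζ‖ • (A.coeff n * e ^ n + conj (B.coeff n * e ^ n)) := by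
    conv_lhs => rw [hpolar]
    simp only [Complex.real_smul, map_mul, Complex.conj_ofReal]
    ring
  rw [hscale, norm_smul, norm_norm, mul_comm]
  exact mul_le_mul_of_nonneg_right (norm_coeff_mul_pow_add_conj_le hN hn he1) (norm_nonneg ζ)

end

lemma sum_range_add_two_mul_pow_le {r : ℝ} (h0 : 0 ≤ r) (h1 : r < 1) (D : ℕ) :
    ∑ n ∈ Finset.range D, ((n + 2 : ℕ) : ℝ) * r ^ (n + 1) ≤ r * (2 - r) / (1 - r) ^ 2 := by
  have hr : ‖r‖ < 1 := by rwa [Real.norm_of_nonneg h0]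
  have hgeom := hasSum_choose_mul_geometric_of_norm_lt_one 1 hr
  simp only [Nat.choose_one_right, one_add_one_eq_two] at hgeom
  have hsum := (hasSum_nat_add_iff' (f := fun n : ℕ => ((n + 1 : ℕ) : ℝ) * r ^ n) 1).2 hgeom
  calc
    _ ≤ 1 / (1 - r) ^ 2 - ∑ n ∈ Finset.range 1, ((n + 1 : ℕ) : ℝ) * r ^ n :=
      sum_le_hasSum _ (fun n _ => by positivity) hsum
    _ = r * (2 - r) / (1 - r) ^ 2 := by
      have := sub_pos.2 h1
      rw [Finset.sum_range_one]
      field_simp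
      ring

lemma eval_derivative_eq_coeff_one_add_sum (A : ℂ[X]) {D : ℕ} (hD : A.natDegree ≤ D) (z : ℂ) :
    A.derivative.eval z =
      A.coeff 1 + ∑ n ∈ Finset.range D, A.coeff (n + 2) * ((n + 2 : ℕ) * z ^ (n + 1)) := by
  rw [eval_eq_sum_range' (n := D + 1)
    ((natDegree_derivative_le A).trans_lt (by lia)), Finset.sum_range_succ', add_comm]
  simp only [coeff_derivative]
  congr 1
  · simp
  · exact Finset.sum_congr rfl fun n _ => by push_cast; ring

lemma fderiv_harmonicOf_eval_sub_fderiv_zero (A B : ℂ[X]) (z e : ℂ) :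
    fderiv ℝ (harmonicOf A.eval B.eval) z e - fderiv ℝ (harmonicOf A.eval B.eval) 0 e =
      ∑ n ∈ Finset.range (max A.natDegree B.natDegree),
        (A.coeff (n + 2) * ((n + 2 : ℕ) * z ^ (n + 1) * e) +
          conj (B.coeff (n + 2) * ((n + 2 : ℕ) * z ^ (n + 1) * e))) := by
  have hdiff (p : ℂ[X]) (hp : p.natDegree ≤ max A.natDegree B.natDegree) :
      p.derivative.eval z * e - p.derivative.eval 0 * e =
        ∑ n ∈ Finset.range (max A.natDegree B.natDegree),
          p.coeff (n + 2) * ((n + 2 : ℕ) * z ^ (n + 1) * e) := by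
    rw [← sub_mul, eval_derivative_eq_coeff_one_add_sum p hp,
      eval_derivative_eq_coeff_one_add_sum p hp]
    simp [Finset.sum_mul, mul_assoc]
  rw [fderiv_harmonicOf_apply A.differentiableAt B.differentiableAt,
    fderiv_harmonicOf_apply A.differentiableAt B.differentiableAt, Finset.sum_add_distrib,
    ← map_sum, ← hdiff A (le_max_left _ _), ← hdiff B (le_max_right _ _), map_sub]
  simp only [Polynomial.deriv]
  ring

lemma norm_fderiv_harmonicOf_eval_sub_fderiv_zero_le {A B : ℂ[X]} {N : ℝ}
    (hN : ∀ w ∈ sphere 0 1, ‖harmonicOf A.eval B.eval w‖ ≤ N) {z : ℂ} {r : ℝ} (hz : ‖z‖ ≤ r)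
    (hr : r < 1) :
    ‖fderiv ℝ (harmonicOf A.eval B.eval) z - fderiv ℝ (harmonicOf A.eval B.eval) 0‖ ≤
      4 * N / π * (r * (2 - r) / (1 - r) ^ 2) := by
  have hr0 : 0 ≤ r := (norm_nonneg z).trans hz
  have hN0 : 0 ≤ N := (norm_nonneg _).trans (hN 1 (by simp))
  have hbound := sum_range_add_two_mul_pow_le hr0 hr (max A.natDegree B.natDegree)
  refine ContinuousLinearMap.opNorm_le_of_unit_norm
    (mul_nonneg (by positivity) (le_trans (by positivity) hbound)) fun e he => ?_
  rw [_root_.sub_apply, fderiv_harmonicOf_eval_sub_fderiv_zero]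
  refine (norm_sum_le _ _).trans (le_trans ?_ (mul_le_mul_of_nonneg_left hbound (by positivity)))
  rw [Finset.mul_sum]
  refine Finset.sum_le_sum fun n _ => (norm_coeff_mul_add_conj_le hN (by lia) _).trans ?_
  rw [norm_mul, he, mul_one, norm_mul, norm_pow, Complex.norm_natCast]
  gcongr

end HarmonicPolynomials

section HarmonicDecomposition

open Polynomial InnerProductSpace Laplacian
open scoped Real ComplexConjugate

lemma exists_harmonicOf_eval_toCircle_of_mem_span_fourier {P : C(AddCircle (1 : ℝ), ℂ)}
    (hP : P ∈ Submodule.span ℂ (range fourier)) :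
    ∃ A B : ℂ[X], ∀ x, P x = harmonicOf A.eval B.eval (AddCircle.toCircle x) := by
  induction hP using Submodule.span_induction with
  | mem P hP =>
    obtain ⟨n, rfl⟩ := hP
    obtain ⟨m, rfl | rfl⟩ := n.eq_nat_or_neg
    · exact ⟨X ^ m, 0, fun x => by simp [harmonicOf, fourier_apply, AddCircle.toCircle_nsmul]⟩
    · refine ⟨0, X ^ m, fun x => ?_⟩
      rw [fourier_neg]
      simp [harmonicOf, fourier_apply, AddCircle.toCircle_nsmul]
  | zero => exact ⟨0, 0, fun x => by simp [harmonicOf]⟩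
  | add P Q _ _ hP hQ =>
    obtain ⟨A, B, hAB⟩ := hP
    obtain ⟨A', B', hAB'⟩ := hQ
    refine ⟨A + A', B + B', fun x => ?_⟩
    simp only [ContinuousMap.add_apply, hAB, hAB', harmonicOf, eval_add, map_add]
    ring
  | smul c P _ hP =>
    obtain ⟨A, B, hAB⟩ := hP
    refine ⟨C c * A, C (conj c) * B, fun x => ?_⟩
    simp [hAB, harmonicOf, mul_add]

lemma exists_norm_sub_harmonicOf_eval_le {f : ℂ → ℂ} (hf : ContinuousOn f (sphere 0 1)) {ε : ℝ}
    (hε : 0 < ε) :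
    ∃ A B : ℂ[X], ∀ z ∈ sphere 0 1, ‖f z - harmonicOf A.eval B.eval z‖ ≤ ε := by
  let F : C(AddCircle (1 : ℝ), ℂ) :=
    ⟨fun x => f (AddCircle.toCircle x), hf.comp_continuous (by fun_prop)
      fun x => mem_sphere_zero_iff_norm.2 (Circle.norm_coe _)⟩
  have hF : F ∈ (Submodule.span ℂ (range fourier)).topologicalClosure :=
    span_fourier_closure_eq_top (T := 1) ▸ Submodule.mem_top
  obtain ⟨P, hP, hFP⟩ := Metric.mem_closure_iff.1 hF ε hε
  obtain ⟨A, B, hAB⟩ := exists_harmonicOf_eval_toCircle_of_mem_span_fourier hP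
  refine ⟨A, B, fun z hz => ?_⟩
  obtain ⟨x, hx⟩ := (AddCircle.homeomorphCircle (T := (1 : ℝ)) one_ne_zero).surjective ⟨z, hz⟩
  have hxz : (AddCircle.toCircle x : ℂ) = z := by
    rw [← AddCircle.homeomorphCircle_apply one_ne_zero, hx]
  have hdist := (ContinuousMap.dist_apply_le_dist (f := F) (g := P) x).trans hFP.le
  rw [dist_eq_norm, hAB x, hxz] at hdist
  simpa [F, hxz] using hdist

lemma le_apply_zero_of_forall_pos {φ : ℝ → ℝ} {a : ℝ} (hφ : Continuous φ)
    (h : ∀ ε > 0, a ≤ φ ε) : a ≤ φ 0 :=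
  ge_of_tendsto ((hφ.tendsto 0).mono_left nhdsWithin_le_nhds)
    (eventually_mem_nhdsWithin.mono h : ∀ᶠ ε in nhdsWithin 0 (Ioi 0), a ≤ φ ε)

section
variable {f : ℂ → ℂ} {M₁ M₂ : ℝ} (hf : ContDiffOn ℝ 2 f (ball 0 1))
  (hfc : ContinuousOn f (closedBall 0 1)) (hM₁ : ∀ z ∈ ball 0 1, ‖Δ f z‖ ≤ M₁)
  (hM₂ : ∀ z ∈ sphere 0 1, ‖f z‖ ≤ M₂)
include hf hfc hM₁ hM₂

lemma exists_fderiv_eq_fderiv_harmonicOf_add {ε : ℝ} (hε : 0 < ε) :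
    ∃ (A B : ℂ[X]) (u : ℂ → ℂ), ContDiffOn ℝ 2 u (ball 0 1) ∧ ContinuousOn u (closedBall 0 1) ∧
      (∀ z ∈ ball 0 1, ‖Δ u z‖ ≤ M₁) ∧ (∀ z ∈ sphere 0 1, ‖u z‖ ≤ ε) ∧
      (∀ z ∈ sphere 0 1, ‖harmonicOf A.eval B.eval z‖ ≤ M₂ + ε) ∧
      ∀ z ∈ ball 0 1, fderiv ℝ f z = fderiv ℝ (harmonicOf A.eval B.eval) z + fderiv ℝ u z := by
  obtain ⟨A, B, hAB⟩ := exists_norm_sub_harmonicOf_eval_le (hfc.mono sphere_subset_closedBall) hε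
  have hharm (z : ℂ) : HarmonicAt (harmonicOf A.eval B.eval) z :=
    harmonicAt_harmonicOf (A.differentiable.analyticAt z) (B.differentiable.analyticAt z)
  have hfz {z : ℂ} (hz : z ∈ ball 0 1) : ContDiffAt ℝ 2 f z :=
    hf.contDiffAt (isOpen_ball.mem_nhds hz)
  refine ⟨A, B, f - harmonicOf A.eval B.eval,
    hf.sub fun z _ => (hharm z).1.contDiffWithinAt,
    hfc.sub fun z _ => (hharm z).1.continuousAt.continuousWithinAt,
    fun z hz => ?_, hAB, fun z hz => ?_, fun z hz => ?_⟩
  · rw [(hfz hz).laplacian_sub (hharm z).1, (hharm z).2.self_of_nhds]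
    simpa using hM₁ z hz
  · have := norm_sub_le (f z) (f z - harmonicOf A.eval B.eval z)
    rw [sub_sub_cancel] at this
    exact this.trans (add_le_add (hM₂ z hz) (hAB z hz))
  · rw [fderiv_sub ((hfz hz).differentiableAt two_ne_zero)
      ((hharm z).1.differentiableAt two_ne_zero), add_sub_cancel]

lemma norm_fderiv_le_of_norm_laplacian_le_of_norm_le {z : ℂ} {r : ℝ} (hzr : ‖z‖ ≤ r)
    (hr : r < 1) : ‖fderiv ℝ f z‖ ≤ 4 * M₂ / π * (1 / (1 - r ^ 2)) + 2 / 3 * M₁ := by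
  have hz : z ∈ ball 0 1 := mem_ball_zero_iff.2 (hzr.trans_lt hr)
  have hM₁0 : 0 ≤ M₁ := (norm_nonneg _).trans (hM₁ z hz)
  have hM₂0 : 0 ≤ M₂ := (norm_nonneg _).trans (hM₂ 1 (by simp))
  have hlimit := le_apply_zero_of_forall_pos (a := ‖fderiv ℝ f z‖)
    (φ := fun ε => 4 * (M₂ + ε) / π * (1 / (1 - ‖z‖ ^ 2)) +
      (4 * ε / (1 - ‖z‖) + M₁ * (4 + 2 * ‖z‖) / 3) / π) (by fun_prop) fun ε hε => by
    obtain ⟨A, B, u, hu, huc, hΔ, hub, hN, hsum⟩ :=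
      exists_fderiv_eq_fderiv_harmonicOf_add hf hfc hM₁ hM₂ hε
    rw [hsum z hz]
    exact norm_add_le_of_le (norm_fderiv_harmonicOf_le
      (fun w _ => A.differentiable.analyticAt w) (fun w _ => B.differentiable.analyticAt w) hN hz)
      (norm_fderiv_le_of_norm_laplacian_le hu huc hΔ hub hz)
  have hpotential : M₁ * (4 + 2 * ‖z‖) / 3 / π ≤ 2 / 3 * M₁ := by
    rw [div_le_iff₀ Real.pi_pos]
    have : 4 + 2 * ‖z‖ ≤ 2 * π := by linarith [Real.pi_gt_three, mem_ball_zero_iff.1 hz]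
    nlinarith
  have hr2 : 0 < 1 - r ^ 2 := by nlinarith [norm_nonneg z]
  calc
    ‖fderiv ℝ f z‖ ≤ 4 * M₂ / π * (1 / (1 - ‖z‖ ^ 2)) + M₁ * (4 + 2 * ‖z‖) / 3 / π := by
      simpa using hlimit
    _ ≤ 4 * M₂ / π * (1 / (1 - r ^ 2)) + 2 / 3 * M₁ := by gcongr

lemma norm_fderiv_sub_fderiv_zero_le_of_norm_le {z : ℂ} {r : ℝ} (hz : ‖z‖ ≤ r) (hr0 : 0 < r)
    (hr1 : r < 1) :
    ‖fderiv ℝ f z - fderiv ℝ f 0‖ ≤ 4 * M₂ / π * (r * (2 - r) / (1 - r) ^ 2) +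
      2 * M₁ * (Real.log (4 * (1 + r)) - Real.log r) * ((2 + r) * r) := by
  have hlimit := le_apply_zero_of_forall_pos (a := ‖fderiv ℝ f z - fderiv ℝ f 0‖)
    (φ := fun ε => 4 * (M₂ + ε) / π * (r * (2 - r) / (1 - r) ^ 2) +
      (2 * M₁ * (Real.log (4 * (1 + r)) - Real.log r) * ((2 + r) * r) + 4 * ε / (1 - r)))
    (by fun_prop) fun ε hε => by
    obtain ⟨A, B, u, hu, huc, hΔ, hub, hN, hsum⟩ :=
      exists_fderiv_eq_fderiv_harmonicOf_add hf hfc hM₁ hM₂ hε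
    rw [hsum z (mem_ball_zero_iff.2 (hz.trans_lt hr1)), hsum 0 (mem_ball_self one_pos),
      add_sub_add_comm]
    exact norm_add_le_of_le (norm_fderiv_harmonicOf_eval_sub_fderiv_zero_le hN hz hr1)
      (norm_fderiv_sub_fderiv_zero_le hu huc hΔ hub hz hr0 hr1)
  simpa using hlimit

lemma norm_fderiv_zero_apply_lt (hM₂0 : 0 < M₂) {e : ℂ} (he : ‖e‖ = 1) :
    ‖fderiv ℝ f 0 e‖ < 4 / π * M₂ + 2 / 3 * M₁ := by
  have hM₁0 : 0 ≤ M₁ := (norm_nonneg _).trans (hM₁ 0 (mem_ball_self one_pos))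
  have hrot (t : ℝ) : rot e t ∈ sphere 0 1 := mem_sphere_zero_iff_norm.2 (norm_rot he t)
  have hcoeff : ‖cosCoeff f 0 e 1‖ < 4 * M₂ := by
    have := norm_integral_cos_smul_lt hM₂0
      (hfc.comp_continuous (continuous_rot e) fun t => sphere_subset_closedBall (hrot t))
      fun t => hM₂ _ (hrot t)
    simpa [cosCoeff] using this
  have hcentre := norm_inv_smul_cosCoeff_sub_le_of_continuousOn he one_pos hf hfc hM₁
  rw [inv_one, one_smul, norm_sub_rev] at hcentre
  have hπ := (norm_le_norm_add_norm_sub' (π • fderiv ℝ f 0 e) (cosCoeff f 0 e 1)).trans_lt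
    (add_lt_add_of_lt_of_le hcoeff hcentre)
  rw [norm_smul, Real.norm_of_nonneg Real.pi_pos.le, ← lt_div_iff₀' Real.pi_pos, add_div] at hπ
  refine hπ.trans_le (add_le_add (by ring_nf; rfl) ?_)
  rw [div_le_iff₀ Real.pi_pos]
  nlinarith [Real.pi_gt_three]

end

end HarmonicDecomposition

section BiLipschitz

open InnerProductSpace Laplacian
open scoped Real ComplexConjugate

lemma lap_eq_laplacian {f : ℂ → ℂ} {z : ℂ} (hf : ContDiffAt ℝ 2 f z) : lap f z = Δ f z := by
  have hdf : DifferentiableAt ℝ (fderiv ℝ f) z :=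
    (hf.fderiv_right (m := 1) (by norm_num)).differentiableAt one_ne_zero
  have happly (e : ℂ) : fderiv ℝ (fun w => fderiv ℝ f w e) z e = fderiv ℝ (fderiv ℝ f) z e e := by
    rw [fderiv_clm_apply hdf (by fun_prop)]
    simp
  rw [lap, happly, happly, laplacian_eq_fderiv_fderiv f z norm_one, mul_one]

lemma fderiv_apply_eq_wdz_mul_add_wdzbar_mul_conj (f : ℂ → ℂ) (z x : ℂ) :
    fderiv ℝ f z x = wdz f z * x + wdzbar f z * conj x := by
  have hx : x = x.re • (1 : ℂ) + x.im • Complex.I := by simp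
  have hconj : conj x = x.re - x.im * Complex.I := by apply Complex.ext <;> simp
  have hre_im : x = x.re + x.im * Complex.I := (Complex.re_add_im x).symm
  conv_lhs => rw [hx, map_add, map_smul, map_smul, Complex.real_smul, Complex.real_smul]
  rw [hconj, wdz, wdzbar]
  linear_combination (x.im * fderiv ℝ f z Complex.I) * Complex.I_mul_I -
    (fderiv ℝ f z 1 - Complex.I * fderiv ℝ f z Complex.I) / 2 * hre_im

lemma exists_norm_mul_add_mul_conj_eq (a b : ℂ) :
    ∃ e : ℂ, ‖e‖ = 1 ∧ ‖a * e + b * conj e‖ = ‖a‖ + ‖b‖ := by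
  -- `e` turns `a` and `b` to the common argument `(arg a + arg b) / 2`.
  let θ := (b.arg - a.arg) / 2
  let φ := (a.arg + b.arg) / 2
  have ha : a * Complex.exp (θ * Complex.I) = ‖a‖ * Complex.exp (φ * Complex.I) := by
    conv_lhs => rw [← Complex.norm_mul_exp_arg_mul_I a, mul_assoc, ← Complex.exp_add]
    simp only [θ, φ]; push_cast; ring_nf
  have hb : b * conj (Complex.exp (θ * Complex.I)) = ‖b‖ * Complex.exp (φ * Complex.I) := by
    rw [← Complex.exp_conj, map_mul, Complex.conj_ofReal, Complex.conj_I]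
    conv_lhs => rw [← Complex.norm_mul_exp_arg_mul_I b, mul_assoc, ← Complex.exp_add]
    simp only [θ, φ]; push_cast; ring_nf
  refine ⟨Complex.exp (θ * Complex.I), Complex.norm_exp_ofReal_mul_I θ, ?_⟩
  rw [ha, hb, ← add_mul, norm_mul, Complex.norm_exp_ofReal_mul_I, mul_one, ← Complex.ofReal_add,
    Complex.norm_of_nonneg (by positivity)]

lemma exists_norm_fderiv_apply_eq_norm_wdz_add_norm_wdzbar (f : ℂ → ℂ) (z : ℂ) :
    ∃ e : ℂ, ‖e‖ = 1 ∧ ‖fderiv ℝ f z e‖ = ‖wdz f z‖ + ‖wdzbar f z‖ := by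
  simpa only [fderiv_apply_eq_wdz_mul_add_wdzbar_mul_conj] using
    exists_norm_mul_add_mul_conj_eq (wdz f z) (wdzbar f z)

lemma norm_wdz_sub_norm_wdzbar_mul_le_norm_fderiv_apply (f : ℂ → ℂ) (z x : ℂ) :
    (‖wdz f z‖ - ‖wdzbar f z‖) * ‖x‖ ≤ ‖fderiv ℝ f z x‖ := by
  rw [fderiv_apply_eq_wdz_mul_add_wdzbar_mul_conj]
  simpa [sub_mul] using norm_sub_norm_le (wdz f z * x) (-(wdzbar f z * conj x))

lemma one_div_lt_sub_of_one_le_sq_sub_sq {a b A : ℝ} (ha : 0 ≤ a) (hb : 0 ≤ b)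
    (h : 1 ≤ a ^ 2 - b ^ 2) (hA : a + b < A) : 1 / A < a - b := by
  have hsub : 0 < a - b := by nlinarith
  rw [div_lt_iff₀ (by linarith)]
  nlinarith

lemma sub_mul_norm_sub_le_of_norm_fderiv_sub_le {E F : Type*} [NormedAddCommGroup E]
    [NormedSpace ℝ E] [NormedAddCommGroup F] [NormedSpace ℝ F] {f : E → F} {L : E →L[ℝ] F}
    {s : Set E} {m C : ℝ} (hs : Convex ℝ s) (hf : ∀ x ∈ s, DifferentiableAt ℝ f x)
    (hC : ∀ x ∈ s, ‖fderiv ℝ f x - L‖ ≤ C) (hm : ∀ v, m * ‖v‖ ≤ ‖L v‖) {x y : E} (hx : x ∈ s)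
    (hy : y ∈ s) : (m - C) * ‖x - y‖ ≤ ‖f x - f y‖ := by
  have hdiff := hs.norm_image_sub_le_of_norm_fderiv_le' hf hC hy hx
  have htri := norm_sub_norm_le (L (x - y)) (f x - f y)
  rw [norm_sub_rev (L (x - y))] at htri
  linarith [hm (x - y)]

lemma norm_le_of_mem_closedBall_of_forall_mem_ball {E F : Type*} [NormedAddCommGroup E]
    [NormedSpace ℝ E] [NormedAddCommGroup F] {f : E → F} {c x : E} {R M : ℝ} (hR : R ≠ 0)
    (hf : ContinuousOn f (closedBall c R)) (hM : ∀ y ∈ ball c R, ‖f y‖ ≤ M)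
    (hx : x ∈ closedBall c R) : ‖f x‖ ≤ M := by
  rw [← closure_ball c hR] at hf hx
  exact le_on_closure hM hf.norm continuousOn_const hx

theorem stmt16_general {M₁ M₂ : ℝ} (hM₂ : 0 < M₂) {f : ℂ → ℂ}
    (hf : ContDiffOn ℝ 2 f (ball (0 : ℂ) 1)) (hfc : ContinuousOn f (closedBall (0 : ℂ) 1))
    (hJ : 1 ≤ ‖wdz f 0‖ ^ 2 - ‖wdzbar f 0‖ ^ 2) (hlap : ∀ z ∈ ball (0 : ℂ) 1, ‖lap f z‖ ≤ M₁)
    (hfb : ∀ z ∈ ball (0 : ℂ) 1, ‖f z‖ ≤ M₂) {r : ℝ} (hr : r ∈ Ioo (0 : ℝ) 1)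
    (hle : 4 * M₂ / π * (r * (2 - r) / (1 - r) ^ 2) +
      2 * M₁ * (Real.log (4 * (1 + r)) - Real.log r) * ((2 + r) * r) ≤
        1 / (4 / π * M₂ + 2 / 3 * M₁)) :
    ∃ L₁ : ℝ, 0 < L₁ ∧ ∀ z₁ ∈ ball (0 : ℂ) r, ∀ z₂ ∈ ball (0 : ℂ) r,
      L₁ * ‖z₁ - z₂‖ ≤ ‖f z₁ - f z₂‖ ∧
      ‖f z₁ - f z₂‖ ≤ (4 * M₂ / π * (1 / (1 - r ^ 2)) + 2 / 3 * M₁) * ‖z₁ - z₂‖ := by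
  have hsub : ball (0 : ℂ) r ⊆ ball 0 1 := ball_subset_ball hr.2.le
  have hfz (z : ℂ) (hz : z ∈ ball 0 1) : ContDiffAt ℝ 2 f z :=
    hf.contDiffAt (isOpen_ball.mem_nhds hz)
  have hfd (z : ℂ) (hz : z ∈ ball 0 r) : DifferentiableAt ℝ f z :=
    (hfz z (hsub hz)).differentiableAt two_ne_zero
  have hΔ (z : ℂ) (hz : z ∈ ball 0 1) : ‖Δ f z‖ ≤ M₁ :=
    lap_eq_laplacian (hfz z hz) ▸ hlap z hz
  have hfs (z : ℂ) (hz : z ∈ sphere 0 1) : ‖f z‖ ≤ M₂ :=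
    norm_le_of_mem_closedBall_of_forall_mem_ball one_ne_zero hfc hfb (sphere_subset_closedBall hz)
  obtain ⟨e, he, hmax⟩ := exists_norm_fderiv_apply_eq_norm_wdz_add_norm_wdzbar f 0
  have hzero := hmax ▸ norm_fderiv_zero_apply_lt hf hfc hΔ hfs hM₂ he
  have hgap := one_div_lt_sub_of_one_le_sq_sub_sq (norm_nonneg _) (norm_nonneg _) hJ hzero
  have hvar (z : ℂ) (hz : z ∈ ball 0 r) := (norm_fderiv_sub_fderiv_zero_le_of_norm_le hf hfc hΔ hfs
    (mem_ball_zero_iff.1 hz).le hr.1 hr.2).trans hle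
  have hgrad (z : ℂ) (hz : z ∈ ball 0 r) := norm_fderiv_le_of_norm_laplacian_le_of_norm_le
    hf hfc hΔ hfs (mem_ball_zero_iff.1 hz).le hr.2
  exact ⟨_, sub_pos.2 hgap, fun z₁ h₁ z₂ h₂ =>
    ⟨sub_mul_norm_sub_le_of_norm_fderiv_sub_le (convex_ball 0 r) hfd hvar
      (norm_wdz_sub_norm_wdzbar_mul_le_norm_fderiv_apply f 0) h₁ h₂,
    (convex_ball 0 r).norm_image_sub_le_of_norm_fderiv_le hfd hgrad h₂ h₁⟩⟩

end BiLipschitz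

/-- Corollary 1.11: `f` is bi-Lipschitz on `𝔻_{r₀}`. -/
theorem stmt16 (M₁ M₂ : ℝ) (hM₁ : 0 ≤ M₁) (hM₂ : 0 < M₂) (g f : ℂ → ℂ)
    (hg : ContinuousOn g (closedBall (0:ℂ) 1))
    (hf2 : ContDiffOn ℝ 2 f (ball (0:ℂ) 1))
    (hfc : ContinuousOn f (closedBall (0:ℂ) 1))
    (hfg : ∀ z ∈ ball (0:ℂ) 1, lap f z = g z)
    (hf0 : f 0 = 0)
    (hJ : ‖wdz f 0‖ ^ 2 - ‖wdzbar f 0‖ ^ 2 = 1)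
    (hgb : ∀ z ∈ ball (0:ℂ) 1, ‖g z‖ ≤ M₁)
    (hfb : ∀ z ∈ ball (0:ℂ) 1, ‖f z‖ ≤ M₂)
    (r₀ : ℝ) (hr₀ : r₀ ∈ Set.Ioo (0:ℝ) 1)
    (heq : 1 / (4 / Real.pi * M₂ + 2 / 3 * M₁) -
        4 * M₂ / Real.pi * (r₀ * (2 - r₀) / (1 - r₀) ^ 2) -
        2 * M₁ * (Real.log (4 * (1 + r₀)) - Real.log r₀) * ((2 + r₀) * r₀) = 0) :
    ∃ L₁ : ℝ, 0 < L₁ ∧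
      ∀ z₁ ∈ ball (0:ℂ) r₀, ∀ z₂ ∈ ball (0:ℂ) r₀,
        L₁ * ‖z₁ - z₂‖ ≤ ‖f z₁ - f z₂‖ ∧
        ‖f z₁ - f z₂‖ ≤ (4 * M₂ / Real.pi * (1 / (1 - r₀ ^ 2)) + 2 / 3 * M₁) * ‖z₁ - z₂‖ := by
  exact stmt16_general hM₂ hf2 hfc hJ.ge (fun z hz => hfg z hz ▸ hgb z hz) hfb hr₀ (by linarith)
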